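/- arXiv:1304.5061 — 3 statements merged into one kernel-verified Lean document; each statement's English description precedes it below -/
import Mathlib

section
/- Let G be a finitely presented group and p a prime. Then rdef(G) − 1 ≤ DG(G) ≤ DG_p(G) ≤ RG(G). In particular, if the residual deficiency of G is greater than one, then G has positive rank gradient and G is large. -/
/-! Write `[G : L]` for the index of `L` and `C_p` for the cyclic group of order `p`.

*Reidemeister–Schreier.* The preimage in `F_n` of a subgroup `L` of index `N` is free of rank
`N (n - 1) + 1` (`free_subgroup_rank`; the rank is found by counting homomorphisms to `C_2` through
cocycles of the action groupoid on `F_n ⧸ L`). A relator `r` of `G` is replaced by its conjugates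
over representatives of the cosets of `L`; if `L` is normal and `r = u ^ m`, double cosets of `L`
and `⟨u⟩` suffice, so that `r` only contributes `N / k` relators, `k` being the order of `u`
modulo `L` (`reidemeister_schreier`, `exists_double_transversal`).

*`rdef G - 1 ≤ DG G`* (`rdef_le_DG`). As `u i ^ m i` is a relator, the orders modulo the finite
residual are finite, and are all realised in a single finite quotient `G ⧸ K`. The presentation of
`K` obtained from the double cosets has deficiency `1 + [G : K] (n - 1 - ∑ 1 / k i)`.

*`DG G ≤ DGp p G`* (`DG_le_DGp`). Normalised deficiency minus one does not decrease when passing to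
the normal core, and each relator has weight at most one in the `p`-deficiency.

*`DGp p G ≤ RG G`* (`DGp_le_RG`). For `L` normal of finite index, `p_bound` counts homomorphisms
from the preimage of `L` to `C_p`. A relator `s ^ p ^ ν` yields conditions on such a homomorphism
only if the order of `s` modulo `L` is exactly `p ^ ν`, and then at most `[G : L] / p ^ ν` of them;
convergence of the weights leaves finitely many such relators. Hence `[G : L] (def_p - 1) ≤ d - 1`
whenever `d` elements generate `L`. Two finite index subgroups are compared through the normal core
of their intersection.

*Largeness.* If `1 < rdef G`, a finite index subgroup `H` has a presentation with `n` generators and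
at most `n - 2` relators, and the Baumslag–Pride theorem (`large_of_deficiency`) applies. A
surjection of the free group onto `ℤ` killing the relators allows one to rewrite them as words in
`t` and `y 0, …, y (n - 1)` with exponent sum zero in `t`, the total number of relators now being at
most `n - 1`. Map `t` to a cyclic shift of order `N` decorated with one letter `a`, and `y i` to a
function `x ↦ b ^ c i x`, in `⟨a, b⟩ ≀ᵣ C_N`. If `c` vanishes in a large ball around the letter `a`,
every coordinate of a relator is a power of `a` or a power of `b` (`bpHom_local`). The former are
trivial as the exponent sum of `t` vanishes; the latter are trivial if `c` satisfies at most
`(n - 1) N` linear equations, in `n N - O(1)` unknowns. For `N` large there is a primitive solution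
`c`, and one coordinate maps the kernel of `H → C_N` onto `⟨a, b⟩`.
-/

open scoped Classical ENNReal

namespace ResDef

variable {G : Type*} [Group G]

/-- The order of the image of `x` in `G ⧸ H`: the least positive `j` with `x ^ j ∈ H`,
or `0` if there is no such `j`. -/
noncomputable def orderIn (H : Subgroup G) (x : G) : ℕ :=
  sInf {j : ℕ | 0 < j ∧ x ^ j ∈ H}

/-- The finite residual: the intersection of all finite index subgroups. -/
def finiteResidual (G : Type*) [Group G] : Subgroup G :=
  ⨅ (H : Subgroup G) (_ : H.index ≠ 0), H

/-- An element of a free group is not a proper power. -/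
def NotProperPower {α : Type*} (u : FreeGroup α) : Prop :=
  ∀ (v : FreeGroup α) (k : ℕ), u = v ^ k → k = 1

/-- `G` admits a finite presentation. -/
def FinitelyPresentedGroup (G : Type*) [Group G] : Prop :=
  ∃ (n : ℕ) (R : Finset (FreeGroup (Fin n))) (φ : FreeGroup (Fin n) →* G),
    Function.Surjective φ ∧ φ.ker = Subgroup.normalClosure (R : Set (FreeGroup (Fin n)))

/-- The deficiency of a finitely presented group. -/
noncomputable def deficiency (G : Type*) [Group G] : ℝ :=
  sSup {x : ℝ | ∃ (n : ℕ) (R : Finset (FreeGroup (Fin n))) (φ : FreeGroup (Fin n) →* G),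
    Function.Surjective φ ∧ φ.ker = Subgroup.normalClosure (R : Set (FreeGroup (Fin n))) ∧
    x = (n : ℝ) - (R.card : ℝ)}

/-- The residual deficiency of a finitely presented group. -/
noncomputable def rdef (G : Type*) [Group G] : ℝ :=
  sSup {x : ℝ | ∃ (n s : ℕ) (u : Fin s → FreeGroup (Fin n)) (m : Fin s → ℕ)
    (φ : FreeGroup (Fin n) →* G),
    (∀ i, 1 ≤ m i) ∧ (∀ i, NotProperPower (u i)) ∧ Function.Surjective φ ∧
    φ.ker = Subgroup.normalClosure (Set.range fun i => u i ^ m i) ∧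
    x = (n : ℝ) - ∑ i, ((orderIn (finiteResidual G) (φ (u i)) : ℝ))⁻¹}

/-- The deficiency gradient. -/
noncomputable def DG (G : Type*) [Group G] : ℝ :=
  sSup {x : ℝ | ∃ H : Subgroup G, H.index ≠ 0 ∧
    x = (deficiency H - 1) / (H.index : ℝ)}

/-- `ν_p(r)`: the largest `k` such that `r = s ^ (p ^ k)` for some `s`. -/
noncomputable def nuP (p : ℕ) {α : Type*} (r : FreeGroup α) : ℕ :=
  sSup {k : ℕ | ∃ s : FreeGroup α, r = s ^ (p ^ k)}

/-- The `p`-deficiency of a group. -/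
noncomputable def defP (p : ℕ) (G : Type*) [Group G] : ℝ :=
  sSup {x : ℝ | ∃ (n : ℕ) (R : Set (FreeGroup (Fin n))) (φ : FreeGroup (Fin n) →* G),
    Function.Surjective φ ∧ φ.ker = Subgroup.normalClosure R ∧
    Summable (fun r : R => ((p : ℝ) ^ (nuP p r.1))⁻¹) ∧
    x = (n : ℝ) - ∑' r : R, ((p : ℝ) ^ (nuP p r.1))⁻¹}

/-- The `p`-deficiency gradient. -/
noncomputable def DGp (p : ℕ) (G : Type*) [Group G] : ℝ :=
  sSup {x : ℝ | ∃ H : Subgroup G, H.Normal ∧ H.index ≠ 0 ∧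
    x = (defP p H - 1) / (H.index : ℝ)}

/-- The rank (minimal number of generators) of a group. -/
noncomputable def grpRank (G : Type*) [Group G] : ℕ :=
  sInf {n : ℕ | ∃ S : Finset G, S.card = n ∧ Subgroup.closure (S : Set G) = ⊤}

/-- The rank gradient. -/
noncomputable def RG (G : Type*) [Group G] : ℝ :=
  sInf {x : ℝ | ∃ H : Subgroup G, H.index ≠ 0 ∧
    x = ((grpRank H : ℝ) - 1) / (H.index : ℝ)}

/-- The `p`-rank: the largest `n` such that `G` surjects onto `(C_p)^n`. -/
noncomputable def pRank (p : ℕ) (G : Type*) [Group G] : ℕ :=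
  sSup {n : ℕ | ∃ f : G →* (Fin n → Multiplicative (ZMod p)), Function.Surjective f}

/-- The `p`-rank gradient. -/
noncomputable def RGp (p : ℕ) (G : Type*) [Group G] : ℝ :=
  sInf {x : ℝ | ∃ H : Subgroup G, H.Normal ∧ H.index ≠ 0 ∧
    x = ((pRank p H : ℝ) - 1) / (H.index : ℝ)}

/-- `G` is large: some finite index subgroup surjects onto a free group of rank 2. -/
def Large (G : Type*) [Group G] : Prop :=
  ∃ H : Subgroup G, H.index ≠ 0 ∧ ∃ f : H →* FreeGroup (Fin 2), Function.Surjective f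

/-- The first Betti number: the largest `n` such that `G` surjects onto `ℤ^n`. -/
noncomputable def firstBetti (G : Type*) [Group G] : ℕ :=
  sSup {n : ℕ | ∃ f : G →* Multiplicative (Fin n → ℤ), Function.Surjective f}

/-- The order of the image of `x` in `G ⧸ H`, as an extended natural number. -/
noncomputable def orderInE (H : Subgroup G) (x : G) : ℕ∞ :=
  if orderIn H x = 0 then ⊤ else (orderIn H x : ℕ∞)

/-- `ν(g; G, K)` from the paper, valued in `ℕ∞`. -/
noncomputable def nu (K : Subgroup G) (g : G) : ℕ∞ :=
  if g ∈ K then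
    sSup ((fun a : G => orderInE K a) '' {a : G | ∃ n : ℤ, a ^ n = g})
  else
    sSup ((fun q : G × ℤ => (q.2.natAbs : ℕ∞)) '' {q : G × ℤ | q.2 ≠ 0 ∧ q.1 ^ q.2 = g})

/-- The relative size `ν(g;G,K)⁻¹` of an element (`0` if `ν` is infinite). -/
noncomputable def relsizeElem (K : Subgroup G) (g : G) : ℝ :=
  (((nu K g).toNat : ℝ))⁻¹

/-- The relative size of a finite set. -/
noncomputable def relsizeFinset (K : Subgroup G) (S : Finset G) : ℝ :=
  ∑ g ∈ S, relsizeElem K g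

/-- The relative size of a normal subgroup `M`, finitely generated as a normal subgroup. -/
noncomputable def relsizeSubgroup (K M : Subgroup G) : ℝ :=
  sInf {x : ℝ | ∃ S : Finset G, Subgroup.normalClosure (S : Set G) = M ∧
    x = relsizeFinset K S}

/-- `a` is a minimal root of `g` in `G` with respect to `K`. -/
def IsMinimalRoot (K : Subgroup G) (g a : G) : Prop :=
  (g ∈ K ∧ (∃ n : ℤ, a ^ n = g) ∧ ((orderIn K a : ℕ∞) = nu K g)) ∨
  (g ∉ K ∧ ∃ m : ℕ, (m : ℕ∞) = nu K g ∧ a ^ m = g)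

/-! ### The Schreier index formula -/

/-- The `A`-valued 1-cocycles of the action groupoid of `F` on `F ⧸ H`. -/
abbrev Cocyc {F : Type*} [Group F] (H : Subgroup F) (A : Type*) [CommGroup A] : Type _ :=
  {δ : F → F ⧸ H → A // ∀ g h x, δ (g * h) x = δ g (h • x) * δ h x}

lemma cocyc_one {F : Type*} [Group F] {H : Subgroup F} {A : Type*} [CommGroup A]
    (δ : Cocyc H A) (x : F ⧸ H) : δ.1 1 x = 1 := by
  have := δ.2 1 1 x
  simpa using this

lemma cocyc_inv {F : Type*} [Group F] {H : Subgroup F} {A : Type*} [CommGroup A]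
    (δ : Cocyc H A) (g : F) (x : F ⧸ H) : δ.1 g⁻¹ x = (δ.1 g (g⁻¹ • x))⁻¹ := by
  have := δ.2 g g⁻¹ x
  rw [mul_inv_cancel, cocyc_one] at this
  exact (inv_eq_of_mul_eq_one_right this.symm).symm

/-- A cocycle over a free group is determined by its arbitrary values on the generators. -/
lemma cocyc_bij_gen {n : ℕ} (H : Subgroup (FreeGroup (Fin n))) (A : Type*) [CommGroup A] :
    Function.Bijective
      (fun (δ : Cocyc H A) (i : Fin n) => δ.1 (FreeGroup.of i)) := by
  constructor
  · intro δ ε h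
    have key : ∀ g x, δ.1 g x = ε.1 g x := by
      intro g
      induction g using FreeGroup.induction_on with
      | C1 => intro x; rw [cocyc_one, cocyc_one]
      | of i => intro x; exact congrFun (congrFun h i) x
      | inv_of i ih => intro x; rw [cocyc_inv, cocyc_inv, ih]
      | mul a b ha hb => intro x; rw [δ.2, ε.2, ha, hb]
    exact Subtype.ext (funext fun g => funext fun x => key g x)
  · intro c
    -- realise the prescribed values by letting `F` act on `(F ⧸ H) × A` by skew translations
    let P : Fin n → Equiv.Perm ((FreeGroup (Fin n) ⧸ H) × A) := fun i =>
      { toFun := fun q => (FreeGroup.of i • q.1, c i q.1 * q.2)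
        invFun := fun q => ((FreeGroup.of i)⁻¹ • q.1, (c i ((FreeGroup.of i)⁻¹ • q.1))⁻¹ * q.2)
        left_inv := fun q => by simp
        right_inv := fun q => by simp }
    let L : FreeGroup (Fin n) →* Equiv.Perm ((FreeGroup (Fin n) ⧸ H) × A) := FreeGroup.lift P
    have hL : ∀ g x a, L g (x, a) = (g • x, (L g (x, 1)).2 * a) := by
      intro g
      induction g using FreeGroup.induction_on with
      | C1 => intro x a; simp
      | of i => intro x a; simp [L, P]
      | inv_of i ih => intro x a; rw [map_inv]; simp [L, P, Equiv.Perm.inv_def, Equiv.symm]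
      | mul g h hg hh =>
        intro x a
        rw [map_mul, Equiv.Perm.mul_apply, Equiv.Perm.mul_apply, hh x a, hh x 1, hg, hg _ (_ * 1)]
        simp [mul_smul, mul_assoc]
    refine ⟨⟨fun g x => (L g (x, 1)).2, fun g h x => ?_⟩, ?_⟩
    · beta_reduce
      rw [map_mul, Equiv.Perm.mul_apply, hL h x 1, hL g]
    · funext i x
      simp [L, P]

/-- Shapiro's lemma in degree one, before dividing by coboundaries. -/
lemma cocyc_bij_hom {F : Type*} [Group F] (H : Subgroup F) (A : Type*) [CommGroup A] :
    Nonempty (Cocyc H A × A ≃ (H →* A) × (F ⧸ H → A)) := by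
  let x₀ : F ⧸ H := ((1 : F) : F ⧸ H)
  let t : F ⧸ H → F := fun x => x.out
  have ht : ∀ x, ((t x : F) : F ⧸ H) = x := fun x => Quotient.out_eq' x
  have htx : ∀ x, t x • x₀ = x := fun x => by
    change ((t x * 1 : F) : F ⧸ H) = x
    rw [mul_one, ht]
  have hfix : ∀ h ∈ H, h • x₀ = x₀ := fun h hh => by
    change ((h * 1 : F) : F ⧸ H) = ((1 : F) : F ⧸ H)
    rw [mul_one, QuotientGroup.eq]; simpa using hh
  have ht0 : t x₀ ∈ H := by
    have := ht x₀
    rw [QuotientGroup.eq] at this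
    simpa using this
  have hmem : ∀ g x, (t (g • x))⁻¹ * (g * t x) ∈ H := fun g x => by
    rw [← QuotientGroup.eq, ht]
    change g • x = g • ((t x : F) : F ⧸ H)
    rw [ht]
  let f : Cocyc H A → (H →* A) := fun δ =>
    { toFun := fun h => δ.1 h x₀
      map_one' := cocyc_one δ x₀
      map_mul' := fun h k => by
        change δ.1 (h.1 * k.1) x₀ = _
        rw [δ.2, hfix k.1 k.2] }
  refine ⟨Equiv.ofBijective (fun q => (f q.1, fun x => q.1.1 (t x) x₀ * q.2)) ⟨?_, ?_⟩⟩
  · rintro ⟨δ, a⟩ ⟨ε, b⟩ h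
    have h1 : f δ = f ε := congrArg Prod.fst h
    have h2 : ∀ x, δ.1 (t x) x₀ * a = ε.1 (t x) x₀ * b := fun x =>
      congrFun (congrArg Prod.snd h) x
    have h1' : ∀ k (hk : k ∈ H), δ.1 k x₀ = ε.1 k x₀ := fun k hk => DFunLike.congr_fun h1 ⟨k, hk⟩
    have hab : a = b := by
      have := h2 x₀
      rw [h1' _ ht0] at this
      exact mul_left_cancel this
    subst hab
    have h3 : ∀ x, δ.1 (t x) x₀ = ε.1 (t x) x₀ := fun x => mul_right_cancel (h2 x)
    have h4 : ∀ (η : Cocyc H A) g x,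
        η.1 g x = η.1 (t (g • x)) x₀ * η.1 ((t (g • x))⁻¹ * (g * t x)) x₀
          * (η.1 (t x) x₀)⁻¹ := fun η g x => by
      have e1 := η.2 (t (g • x)) ((t (g • x))⁻¹ * (g * t x)) x₀
      have e2 := η.2 g (t x) x₀
      rw [htx] at e2
      rw [hfix _ (hmem g x), mul_inv_cancel_left, e2] at e1
      rw [← e1, mul_inv_cancel_right]
    have : δ = ε := Subtype.ext (funext fun g => funext fun x => by
      rw [h4 δ, h4 ε, h3, h3, h1' _ (hmem g x)])
    rw [this]
  · rintro ⟨k, m⟩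
    let δ : Cocyc H A := ⟨fun g x => m (g • x) * k ⟨_, hmem g x⟩ * (m x)⁻¹, fun g h x => by
      have : (⟨_, hmem (g * h) x⟩ : H) = ⟨_, hmem g (h • x)⟩ * ⟨_, hmem h x⟩ := by
        apply Subtype.ext
        simp only [Subgroup.coe_mul, mul_smul]
        group
      beta_reduce
      rw [this, map_mul, mul_smul]
      have e : ∀ a b c d e : A, a * (b * c) * e⁻¹ = a * b * d⁻¹ * (d * c * e⁻¹) := by
        intros; simp [mul_assoc]
      exact e _ _ _ _ _⟩
    refine ⟨(δ, m x₀ * (k ⟨_, ht0⟩)⁻¹), Prod.ext ?_ ?_⟩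
    · ext ⟨h, hh⟩
      change m (h • x₀) * k ⟨_, hmem h x₀⟩ * (m x₀)⁻¹ = k ⟨h, hh⟩
      have e : (⟨_, hmem h x₀⟩ : H) = ⟨_, ht0⟩⁻¹ * (⟨h, hh⟩ * ⟨_, ht0⟩) := by
        apply Subtype.ext
        simp [hfix h hh]
      rw [e, map_mul, map_mul, map_inv, hfix h hh, mul_comm (k ⟨h, hh⟩), inv_mul_cancel_left,
        mul_comm, inv_mul_cancel_left]
    · funext x
      change m (t x • x₀) * k ⟨_, hmem (t x) x₀⟩ * (m x₀)⁻¹ * (m x₀ * (k ⟨_, ht0⟩)⁻¹) = m x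
      have e : (⟨_, hmem (t x) x₀⟩ : H) = ⟨_, ht0⟩ := by
        apply Subtype.ext
        simp [htx]
      rw [e, htx]
      simp [mul_assoc]

/-- The Schreier index formula. -/
theorem free_subgroup_rank {n : ℕ} (H : Subgroup (FreeGroup (Fin n))) (hH : H.index ≠ 0) :
    ∃ n' : ℕ, n' + H.index = n * H.index + 1 ∧ Nonempty (FreeGroup (Fin n') ≃* H) := by
  let A := Multiplicative (ZMod 2)
  have hA : Nat.card A = 2 := by
    change Nat.card (ZMod 2) = 2
    simp
  have : H.FiniteIndex := ⟨hH⟩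
  have hX : Finite (FreeGroup (Fin n) ⧸ H) := Subgroup.finite_quotient_of_finiteIndex
  have hXc : Nat.card (FreeGroup (Fin n) ⧸ H) = H.index := rfl
  obtain ⟨e⟩ := cocyc_bij_hom H A
  let e' := Equiv.ofBijective _ (cocyc_bij_gen H A)
  have : Finite (Cocyc H A) := Finite.of_equiv _ e'.symm
  have : Finite ((H →* A) × (FreeGroup (Fin n) ⧸ H → A)) := Finite.of_equiv _ e
  have : Finite (H →* A) := Finite.prod_left (FreeGroup (Fin n) ⧸ H → A)
  let e₂ := (IsFreeGroup.toFreeGroup H)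
  let X := IsFreeGroup.Generators H
  let e₃ : (X → A) ≃ (H →* A) :=
    FreeGroup.lift.trans (e₂.symm.monoidHomCongrLeftEquiv)
  have : Finite (X → A) := Finite.of_equiv _ e₃.symm
  have : Finite X := by
    refine Finite.of_injective (fun i : X => (Pi.mulSingle i (Multiplicative.ofAdd (1 : ZMod 2)) : X → A)) ?_
    intro i j hij
    by_contra hne
    have := congrFun hij i
    simp only [Pi.mulSingle_eq_same, Pi.mulSingle_eq_of_ne hne] at this
    exact absurd (Multiplicative.ofAdd.injective this) (by decide)
  have c1 := Nat.card_congr e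
  rw [Nat.card_prod, Nat.card_prod, Nat.card_congr e', Nat.card_congr e₃.symm] at c1
  simp only [Nat.card_fun, hA, hXc, Nat.card_fin] at c1
  rw [← pow_mul, ← pow_succ, ← pow_add] at c1
  have c2 := Nat.pow_right_injective (le_refl 2) c1
  refine ⟨Nat.card X, ?_, ⟨(FreeGroup.freeGroupCongr (Finite.equivFin X).symm).trans e₂.symm⟩⟩
  rw [← c2, mul_comm]

/-! ### Presentations and generators of finite index subgroups -/

/-- Nielsen–Schreier coordinates on the preimage of `L` under a finitely generated free cover. -/
lemma exists_lift {n : ℕ} {G : Type*} [Group G] (φ : FreeGroup (Fin n) →* G)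
    (hφ : Function.Surjective φ) (L : Subgroup G) (hL : L.index ≠ 0) :
    ∃ (n' : ℕ) (j : FreeGroup (Fin n') →* FreeGroup (Fin n)) (ψ : FreeGroup (Fin n') →* L),
      n' + L.index = n * L.index + 1 ∧ Function.Injective j ∧ j.range = L.comap φ ∧
      Function.Surjective ψ ∧ ∀ y, (ψ y : G) = φ (j y) := by
  have hi : (L.comap φ).index = L.index := Subgroup.index_comap_of_surjective L hφ
  obtain ⟨n', hn', ⟨e⟩⟩ := free_subgroup_rank (L.comap φ) (hi ▸ hL)
  refine ⟨n', (L.comap φ).subtype.comp e.toMonoidHom, (φ.subgroupComap L).comp e.toMonoidHom,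
    hi ▸ hn', ?_, ?_, ?_, fun y => rfl⟩
  · exact Subtype.val_injective.comp e.injective
  · rw [MonoidHom.range_comp, MonoidHom.range_eq_top.mpr e.surjective, ← MonoidHom.range_eq_map,
      Subgroup.range_subtype]
  · rintro ⟨l, hl⟩
    obtain ⟨f, rfl⟩ := hφ l
    refine ⟨e.symm ⟨f, hl⟩, Subtype.ext ?_⟩
    change φ (e (e.symm ⟨f, hl⟩) : FreeGroup (Fin n)) = φ f
    rw [e.apply_symm_apply]

/-- The kernel of `ψ : F' → L` is normally generated by conjugates of the relators. -/
lemma ker_lift {n n' : ℕ} {G : Type*} [Group G] {φ : FreeGroup (Fin n) →* G} {L : Subgroup G}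
    {j : FreeGroup (Fin n') →* FreeGroup (Fin n)} {ψ : FreeGroup (Fin n') →* L}
    (hj : Function.Injective j) (hr : j.range = L.comap φ) (hψ : ∀ y, (ψ y : G) = φ (j y))
    {R S : Set (FreeGroup (Fin n))} (hR : φ.ker = Subgroup.normalClosure R)
    (hS : S ⊆ φ.ker)
    (hRS : ∀ r ∈ R, ∀ g, ∃ l ∈ L.comap φ, ∃ s ∈ S, g * r * g⁻¹ = l * s * l⁻¹) :
    ψ.ker = Subgroup.normalClosure (j ⁻¹' S) := by
  have hk : ∀ y, y ∈ ψ.ker ↔ j y ∈ φ.ker := fun y => by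
    rw [MonoidHom.mem_ker, MonoidHom.mem_ker, ← hψ]
    simp
  apply le_antisymm
  · intro y hy
    have h1 : φ.ker ≤ (Subgroup.normalClosure (j ⁻¹' S)).map j := by
      rw [hR, Subgroup.normalClosure, Subgroup.closure_le]
      intro x hx
      obtain ⟨r, hr', hc⟩ := Group.mem_conjugatesOfSet_iff.mp hx
      obtain ⟨g, rfl⟩ := isConj_iff.mp hc
      obtain ⟨l, hl, s, hs, he⟩ := hRS r hr' g
      rw [he]
      rw [← hr] at hl
      obtain ⟨a, rfl⟩ := hl
      have hs' : s ∈ L.comap φ := by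
        have : φ s = 1 := hS hs
        simp [this, L.one_mem]
      rw [← hr] at hs'
      obtain ⟨b, rfl⟩ := hs'
      exact ⟨a * b * a⁻¹, Subgroup.normalClosure_normal.conj_mem _
        (Subgroup.subset_normalClosure (show b ∈ j ⁻¹' S from hs)) a, by simp⟩
    obtain ⟨z, hz, hzy⟩ := h1 ((hk y).mp hy)
    exact hj hzy ▸ hz
  · exact Subgroup.normalClosure_le_normal fun y hy => (hk y).mpr (hS hy)

/-- `FinPres G n k`: there is a presentation of `G` with `n` generators and at most `k` relators. -/
def FinPres (G : Type*) [Group G] (n k : ℕ) : Prop :=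
  ∃ (R : Finset (FreeGroup (Fin n))) (φ : FreeGroup (Fin n) →* G),
    Function.Surjective φ ∧ φ.ker = Subgroup.normalClosure (R : Set (FreeGroup (Fin n))) ∧
    R.card ≤ k

/-- `Gen G d`: `G` is generated by a set of `d` elements. -/
def Gen (G : Type*) [Group G] (d : ℕ) : Prop :=
  ∃ S : Finset G, S.card = d ∧ Subgroup.closure (S : Set G) = ⊤

/-- Reidemeister–Schreier: each relator `r i` contributes `(T i).card` relators when `T i`
represents all cosets of the subgroup up to elements commuting with `r i`. -/
lemma reidemeister_schreier {n : ℕ} {G : Type*} [Group G] {φ : FreeGroup (Fin n) →* G}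
    (hφ : Function.Surjective φ) (L : Subgroup G) (hL : L.index ≠ 0)
    {ι : Type*} [Fintype ι] (r : ι → FreeGroup (Fin n))
    (hR : φ.ker = Subgroup.normalClosure (Set.range r)) (T : ι → Finset (FreeGroup (Fin n)))
    (hT : ∀ i g, ∃ l ∈ L.comap φ, ∃ t ∈ T i, g * r i * g⁻¹ = l * (t * r i * t⁻¹) * l⁻¹) :
    ∃ n' : ℕ, n' + L.index = n * L.index + 1 ∧ FinPres L n' (∑ i, (T i).card) := by
  obtain ⟨n', j, ψ, hn', hj, hr, hs, hψ⟩ := exists_lift φ hφ L hL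
  let S : Finset (FreeGroup (Fin n)) :=
    Finset.univ.biUnion fun i => (T i).image fun t => t * r i * t⁻¹
  have hSc : S.card ≤ ∑ i, (T i).card :=
    Finset.card_biUnion_le.trans (Finset.sum_le_sum fun i _ => Finset.card_image_le)
  refine ⟨n', hn', S.preimage j hj.injOn, ψ, hs, ?_, ?_⟩
  · rw [Finset.coe_preimage]
    refine ker_lift hj hr hψ hR ?_ ?_
    · intro x hx
      simp only [S, Finset.coe_biUnion, Set.mem_iUnion, Finset.coe_image, Set.mem_image] at hx
      obtain ⟨i, _, t, _, rfl⟩ := hx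
      exact (MonoidHom.normal_ker φ).conj_mem _
        (hR ▸ Subgroup.subset_normalClosure (Set.mem_range_self i)) _
    · rintro _ ⟨i, rfl⟩ g
      obtain ⟨l, hl, t, ht, he⟩ := hT i g
      refine ⟨l, hl, t * r i * t⁻¹, ?_, he⟩
      simp only [S, Finset.coe_biUnion, Set.mem_iUnion, Finset.coe_image, Set.mem_image]
      exact ⟨i, by simp, t, ht, rfl⟩
  · refine le_trans ?_ hSc
    rw [Finset.card_preimage]
    exact Finset.card_filter_le _ _

/-- A transversal for the right cosets of a finite index subgroup. -/
lemma exists_transversal {F : Type*} [Group F] (M : Subgroup F) (hM : M.index ≠ 0) :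
    ∃ T : Finset F, T.card = M.index ∧ ∀ g, ∃ l ∈ M, ∃ t ∈ T, g = l * t := by
  have : M.FiniteIndex := ⟨hM⟩
  have hX : Finite (F ⧸ M) := Subgroup.finite_quotient_of_finiteIndex
  have := Fintype.ofFinite (F ⧸ M)
  refine ⟨Finset.univ.image fun x : F ⧸ M => (x.out)⁻¹, ?_, fun g => ?_⟩
  · rw [Finset.card_image_of_injective]
    · rw [Finset.card_univ, ← Nat.card_eq_fintype_card]; rfl
    · intro x y h
      have : x.out = y.out := inv_injective h
      rw [← Quotient.out_eq' x, ← Quotient.out_eq' y, this]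
  · have h : ((g⁻¹ : F) : F ⧸ M).out⁻¹ * g⁻¹ ∈ M := by
      rw [← QuotientGroup.eq]; exact Quotient.out_eq' _
    refine ⟨g * ((g⁻¹ : F) : F ⧸ M).out, ?_, (((g⁻¹ : F) : F ⧸ M).out)⁻¹,
      Finset.mem_image_of_mem _ (Finset.mem_univ ((g⁻¹ : F) : F ⧸ M)), ?_⟩
    · simpa using M.inv_mem h
    · simp

/-- Representatives of the double cosets `M \ F / ⟨u⟩`, for `M` normal of finite index. -/
lemma exists_double_transversal {F : Type*} [Group F] (M : Subgroup F) [M.Normal]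
    (hM : M.index ≠ 0) (u : F) :
    ∃ T : Finset F, T.card * orderOf (u : F ⧸ M) = M.index ∧
      ∀ g, ∃ l ∈ M, ∃ t ∈ T, ∃ k : ℤ, g = l * t * u ^ k := by
  have : M.FiniteIndex := ⟨hM⟩
  have hX : Finite (F ⧸ M) := Subgroup.finite_quotient_of_finiteIndex
  let C := Subgroup.zpowers (u : F ⧸ M)
  have := Fintype.ofFinite ((F ⧸ M) ⧸ C)
  refine ⟨Finset.univ.image fun x : (F ⧸ M) ⧸ C => x.out.out, ?_, fun g => ?_⟩
  · rw [Finset.card_image_of_injective]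
    · rw [Finset.card_univ, ← Nat.card_eq_fintype_card, ← Nat.card_zpowers]
      exact C.index_mul_card
    · intro x y h
      have : x.out = y.out := by
        rw [← Quotient.out_eq' x.out, ← Quotient.out_eq' y.out]
        exact congrArg (fun z : F => (z : F ⧸ M)) h
      rw [← Quotient.out_eq' x, ← Quotient.out_eq' y, this]
  · let x : (F ⧸ M) ⧸ C := ((g : F ⧸ M) : (F ⧸ M) ⧸ C)
    have h1 : (x.out)⁻¹ * (g : F ⧸ M) ∈ C := by
      rw [← QuotientGroup.eq]; exact Quotient.out_eq' _
    obtain ⟨k, hk⟩ := Subgroup.mem_zpowers_iff.mp h1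
    have h2 : ((x.out.out : F) : F ⧸ M) = x.out := Quotient.out_eq' _
    refine ⟨g * (x.out.out * u ^ k)⁻¹, ?_, x.out.out,
      Finset.mem_image_of_mem _ (Finset.mem_univ x), k, ?_⟩
    · rw [← QuotientGroup.eq_one_iff, QuotientGroup.mk_mul, QuotientGroup.mk_inv,
        QuotientGroup.mk_mul, h2, QuotientGroup.mk_zpow, hk]
      simp
    · group

lemma gen_of_surjective {G : Type*} [Group G] {n : ℕ} (ψ : FreeGroup (Fin n) →* G)
    (hs : Function.Surjective ψ) : ∃ d ≤ n, Gen G d := by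
  refine ⟨_, ?_, Finset.univ.image fun i => ψ (FreeGroup.of i), rfl, ?_⟩
  · exact Finset.card_image_le.trans (by simp)
  · have h := MonoidHom.range_eq_top.mpr hs
    rw [MonoidHom.range_eq_map, ← FreeGroup.closure_range_of, MonoidHom.map_closure,
      ← Set.range_comp] at h
    simpa [Function.comp_def] using h

/-- The sharp Schreier bound for the number of generators of a finite index subgroup. -/
lemma gen_of_index {G : Type*} [Group G] {d : ℕ} (h : Gen G d) (L : Subgroup G)
    (hL : L.index ≠ 0) : ∃ d', Gen L d' ∧ d' + L.index ≤ d * L.index + 1 := by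
  obtain ⟨S, rfl, hS⟩ := h
  let φ : FreeGroup (Fin S.card) →* G := FreeGroup.lift fun i => (S.equivFin.symm i : G)
  have hφ : Function.Surjective φ := by
    rw [← MonoidHom.range_eq_top, FreeGroup.range_lift_eq_closure, ← hS]
    congr 1
    ext x
    constructor
    · rintro ⟨i, rfl⟩; exact (S.equivFin.symm i).2
    · intro hx; exact ⟨S.equivFin ⟨x, hx⟩, by simp⟩
  obtain ⟨n', j, ψ, hn', hj, hr, hs, hψ⟩ := exists_lift φ hφ L hL
  obtain ⟨d', hd', h⟩ := gen_of_surjective ψ hs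
  exact ⟨d', h, by omega⟩

lemma FinPres.congr {G G' : Type*} [Group G] [Group G'] (e : G ≃* G') {n k : ℕ}
    (h : FinPres G n k) : FinPres G' n k := by
  obtain ⟨R, φ, h1, h2, h3⟩ := h
  refine ⟨R, e.toMonoidHom.comp φ, e.surjective.comp h1, ?_, h3⟩
  rw [← h2]
  ext x
  simp [MonoidHom.mem_ker]

lemma Gen.congr {G G' : Type*} [Group G] [Group G'] (e : G ≃* G') {d : ℕ}
    (h : Gen G d) : Gen G' d := by
  obtain ⟨S, h1, h2⟩ := h
  refine ⟨S.map e.toEquiv.toEmbedding, by simpa using h1, ?_⟩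
  have := congrArg (Subgroup.map e.toMonoidHom) h2
  rw [MonoidHom.map_closure, ← MonoidHom.range_eq_map, MonoidHom.range_eq_top.mpr e.surjective] at this
  simpa using this

lemma FinPres.gen {G : Type*} [Group G] {n k : ℕ} (h : FinPres G n k) : ∃ d, Gen G d := by
  obtain ⟨R, φ, h1, -⟩ := h
  obtain ⟨d, -, h⟩ := gen_of_surjective φ h1
  exact ⟨d, h⟩

/-! ### The lower bound for the rank in terms of the `p`-deficiency -/

lemma eq_pow_nuP (p : ℕ) {α : Type*} (r : FreeGroup α) : ∃ s, r = s ^ (p ^ nuP p r) := by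
  unfold nuP
  by_cases h : BddAbove {k : ℕ | ∃ s : FreeGroup α, r = s ^ (p ^ k)}
  · exact Nat.sSup_mem (s := {k : ℕ | ∃ s : FreeGroup α, r = s ^ (p ^ k)}) ⟨0, r, by simp⟩ h
  · rw [Nat.sSup_of_not_bddAbove h]
    exact ⟨r, by simp⟩

/-- The homological estimate behind `DGp ≤ RG`: a `p`-presentation of `G` bounds from below the
number of generators of any finite index normal subgroup `L`. Relators `s ^ p ^ ν` such that the
order of `s` modulo `L` is less than `p ^ ν` impose no condition on homomorphisms to `C_p`; the
others impose at most `[G : L] / p ^ ν` conditions. -/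
lemma p_bound {p : ℕ} (hp : p.Prime) {n : ℕ} {G : Type*} [Group G] {φ : FreeGroup (Fin n) →* G}
    (hφ : Function.Surjective φ) {R : Set (FreeGroup (Fin n))}
    (hR : φ.ker = Subgroup.normalClosure R)
    (hsum : Summable (fun r : R => ((p : ℝ) ^ (nuP p r.1))⁻¹))
    (L : Subgroup G) [L.Normal] (hL : L.index ≠ 0) {d : ℕ} (hd : Gen L d) :
    (L.index : ℝ) * ((n : ℝ) - ∑' r : R, ((p : ℝ) ^ (nuP p r.1))⁻¹ - 1) ≤ d - 1 := by
  obtain ⟨n', j, ψ, hn', hj, hr, hs, hψ⟩ := exists_lift φ hφ L hL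
  have hp0 : (0 : ℝ) < p := by exact_mod_cast hp.pos
  let M := L.comap φ
  have hM : M.index = L.index := Subgroup.index_comap_of_surjective L hφ
  have hM0 : M.index ≠ 0 := hM ▸ hL
  choose s hsr using fun r : R => eq_pow_nuP p r.1
  choose T hT hTg using fun r : R => exists_double_transversal M hM0 (s r)
  have hRk : ∀ r : R, r.1 ∈ φ.ker := fun r => hR ▸ Subgroup.subset_normalClosure r.2
  have hkM : φ.ker ≤ M := fun x hx => by
    change φ x ∈ L
    rw [MonoidHom.mem_ker.mp hx]; exact L.one_mem
  have ho : ∀ r : R, orderOf (s r : FreeGroup (Fin n) ⧸ M) ∣ p ^ nuP p r.1 := fun r => by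
    rw [orderOf_dvd_iff_pow_eq_one, ← QuotientGroup.mk_pow, ← hsr, QuotientGroup.eq_one_iff]
    exact hkM (hRk r)
  let B : Set R := {r | orderOf (s r : FreeGroup (Fin n) ⧸ M) = p ^ nuP p r.1}
  have hBc : ∀ r ∈ B, ((T r).card : ℝ) = M.index * ((p : ℝ) ^ nuP p r.1)⁻¹ := fun r hr => by
    have := hT r
    rw [hr] at this
    rw [← this]
    push_cast
    rw [mul_assoc, mul_inv_cancel₀ (by positivity), mul_one]
  have hBfin : B.Finite := by
    have h1 := hsum.tendsto_cofinite_zero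
    have h2 : ∀ᶠ r : R in Filter.cofinite, ((p : ℝ) ^ (nuP p r.1))⁻¹ < (M.index : ℝ)⁻¹ :=
      h1.eventually (gt_mem_nhds (by positivity))
    refine Set.Finite.subset h2 fun r hrB => ?_
    have h3 := hBc r hrB
    have h4 : (1 : ℝ) ≤ (T r).card := by
      have : (T r).card ≠ 0 := fun h => hM0 (by rw [← hT r, h, zero_mul])
      exact_mod_cast Nat.one_le_iff_ne_zero.mpr this
    have h5 : (0 : ℝ) < M.index := by positivity
    change ¬ (((p : ℝ) ^ (nuP p r.1))⁻¹ < (M.index : ℝ)⁻¹)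
    rw [not_lt, inv_le_iff_one_le_mul₀ h5]
    linarith [mul_comm (M.index : ℝ) ((p : ℝ) ^ (nuP p r.1))⁻¹]
  let C : Finset (FreeGroup (Fin n)) :=
    hBfin.toFinset.biUnion fun r => (T r).image fun t => t * r.1 * t⁻¹
  have hC : (C.card : ℝ) ≤ M.index * ∑' r : R, ((p : ℝ) ^ (nuP p r.1))⁻¹ := by
    have h1 : C.card ≤ ∑ r ∈ hBfin.toFinset, (T r).card :=
      Finset.card_biUnion_le.trans (Finset.sum_le_sum fun i _ => Finset.card_image_le)
    calc (C.card : ℝ) ≤ ∑ r ∈ hBfin.toFinset, ((T r).card : ℝ) := by exact_mod_cast h1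
      _ = ∑ r ∈ hBfin.toFinset, M.index * ((p : ℝ) ^ nuP p r.1)⁻¹ :=
        Finset.sum_congr rfl fun r hr => hBc r (hBfin.mem_toFinset.mp hr)
      _ = M.index * ∑ r ∈ hBfin.toFinset, ((p : ℝ) ^ nuP p r.1)⁻¹ := by rw [Finset.mul_sum]
      _ ≤ _ := by
        gcongr
        exact hsum.sum_le_tsum _ fun r _ => by positivity
  obtain ⟨S, hSd, hS⟩ := hd
  obtain ⟨A, _, hA⟩ : ∃ (A : Type) (_ : CommGroup A), Nat.card A = p :=
    ⟨Multiplicative (ZMod p), inferInstance, by change Nat.card (ZMod p) = p; simp⟩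
  have hAp : ∀ a : A, a ^ p = 1 := fun a => by rw [← hA]; exact pow_card_eq_one'
  have : Finite A := Nat.finite_of_card_ne_zero (hA ▸ hp.ne_zero)
  let C' := C.preimage j hj.injOn
  choose σ hσ using hs
  -- the restriction map from homomorphisms to their values on `C'` and on lifts of `S`
  let E : (FreeGroup (Fin n') →* A) → (C' → A) × (S → A) := fun f =>
    (fun c => f c.1, fun x => f (σ x.1))
  have hE : Function.Injective E := by
    intro f f' hff
    have e1 : ∀ c ∈ C', (f / f') c = 1 := fun c hc => by
      rw [MonoidHom.div_apply, div_eq_one]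
      exact congrFun (congrArg Prod.fst hff) ⟨c, hc⟩
    have e2 : ∀ x ∈ S, (f / f') (σ x) = 1 := fun x hx => by
      rw [MonoidHom.div_apply, div_eq_one]
      exact congrFun (congrArg Prod.snd hff) ⟨x, hx⟩
    generalize hk : f / f' = k at e1 e2
    have hker : ψ.ker ≤ k.ker := by
      rw [ker_lift hj hr hψ (S := {x | ∃ r ∈ R, ∃ g, x = g * r * g⁻¹}) hR ?_ ?_]
      · refine Subgroup.normalClosure_le_normal ?_
        rintro y ⟨r, hrR, g, hy⟩
        change k y = 1
        have hpow : r = s ⟨r, hrR⟩ ^ _ := hsr ⟨r, hrR⟩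
        obtain ⟨i, hi, hoi⟩ := (Nat.dvd_prime_pow hp).mp (ho ⟨r, hrR⟩)
        by_cases hrB : (⟨r, hrR⟩ : R) ∈ B
        · obtain ⟨l, hl, t, ht, z, rfl⟩ := hTg ⟨r, hrR⟩ g
          obtain ⟨a, rfl⟩ : l ∈ j.range := hr ▸ hl
          have hm : t * r * t⁻¹ ∈ M :=
            hkM ((MonoidHom.normal_ker φ).conj_mem _ (hRk ⟨r, hrR⟩) _)
          obtain ⟨b, hb⟩ : t * r * t⁻¹ ∈ j.range := hr ▸ hm
          have hbC : b ∈ C' := by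
            simp only [C', C, Finset.mem_preimage, Finset.mem_biUnion, Finset.mem_image]
            exact ⟨⟨r, hrR⟩, hBfin.mem_toFinset.mpr hrB, t, ht, hb.symm⟩
          have hcomm : s ⟨r, hrR⟩ ^ z * r * (s ⟨r, hrR⟩ ^ z)⁻¹ = r := by
            have : Commute (s ⟨r, hrR⟩ ^ z) r := by
              conv_rhs => rw [hpow]
              exact (Commute.refl _).zpow_left _ |>.pow_right _
            rw [this.eq, mul_inv_cancel_right]
          have hyab : y = a * b * a⁻¹ := by
            apply hj
            rw [hy, map_mul, map_mul, map_inv, hb]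
            conv_rhs => rw [← hcomm]
            group
          rw [hyab, map_mul, map_mul, map_inv, e1 b hbC]
          simp
        · have hilt : i < nuP p r := lt_of_le_of_ne hi fun h => hrB (by subst h; exact hoi)
          have hm : g * s ⟨r, hrR⟩ ^ p ^ i * g⁻¹ ∈ M := by
            refine Subgroup.Normal.conj_mem inferInstance _ ?_ _
            rw [← QuotientGroup.eq_one_iff, QuotientGroup.mk_pow, ← hoi, pow_orderOf_eq_one]
          obtain ⟨b, hb⟩ : g * s ⟨r, hrR⟩ ^ p ^ i * g⁻¹ ∈ j.range := hr ▸ hm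
          have hyb : y = b ^ p ^ (nuP p r - i) := by
            apply hj
            rw [hy, map_pow, hb, conj_pow, ← pow_mul, ← pow_add, Nat.add_sub_cancel' hi]
            conv_lhs => rw [hpow]
          have : nuP p r - i = (nuP p r - i - 1) + 1 := by omega
          rw [hyb, map_pow, this, pow_succ, pow_mul, hAp]
      · rintro _ ⟨r, hrR, g, rfl⟩
        exact (MonoidHom.normal_ker φ).conj_mem _ (hRk ⟨r, hrR⟩) _
      · intro r hrR g
        exact ⟨1, one_mem _, _, ⟨r, hrR, g, rfl⟩, by simp⟩
    have htop : k.ker.map ψ = ⊤ := by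
      rw [eq_top_iff, ← hS, Subgroup.closure_le]
      exact fun x hx => ⟨σ x, e2 x hx, hσ x⟩
    rw [← div_eq_one, hk]
    refine MonoidHom.ext fun y => ?_
    obtain ⟨y', hy', he⟩ : ψ y ∈ k.ker.map ψ := htop ▸ Subgroup.mem_top _
    have : y'⁻¹ * y ∈ k.ker := hker (by simp [MonoidHom.mem_ker, he])
    have h3 : y ∈ k.ker := by simpa using k.ker.mul_mem hy' this
    exact h3
  have hcard := Nat.card_le_card_of_injective E hE
  have hc1 : Nat.card (FreeGroup (Fin n') →* A) = p ^ n' := by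
    rw [Nat.card_congr FreeGroup.lift.symm, Nat.card_fun, hA, Nat.card_fin]
  rw [hc1, Nat.card_prod, Nat.card_fun, Nat.card_fun, hA, ← pow_add,
    Nat.pow_le_pow_iff_right hp.one_lt, Nat.card_eq_fintype_card, Nat.card_eq_fintype_card,
    Fintype.card_coe, Fintype.card_coe, hSd] at hcard
  have hC' : C'.card ≤ C.card := by
    simp only [C']
    rw [Finset.card_preimage]
    exact Finset.card_filter_le _ _
  rw [hM] at hC
  have h1 : (n' : ℝ) ≤ C.card + d := by exact_mod_cast hcard.trans (by gcongr)
  have h2 : (n' : ℝ) + L.index = n * L.index + 1 := by exact_mod_cast hn'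
  nlinarith

/-! ### The deficiency gradients and the rank gradient -/

/-- Every value in the set defining `defP` is bounded by the number of generators. -/
lemma p_pres_le {p : ℕ} (hp : p.Prime) {G : Type*} [Group G] {d : ℕ} (hd : Gen G d) :
    BddAbove {x : ℝ | ∃ (n : ℕ) (R : Set (FreeGroup (Fin n))) (φ : FreeGroup (Fin n) →* G),
      Function.Surjective φ ∧ φ.ker = Subgroup.normalClosure R ∧
      Summable (fun r : R => ((p : ℝ) ^ (nuP p r.1))⁻¹) ∧
      x = (n : ℝ) - ∑' r : R, ((p : ℝ) ^ (nuP p r.1))⁻¹} := by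
  refine ⟨d, ?_⟩
  rintro x ⟨n, R, φ, h1, h2, h3, rfl⟩
  have := p_bound hp h1 h2 h3 ⊤ (by simp) (hd.congr Subgroup.topEquiv.symm)
  simp only [Subgroup.index_top, Nat.cast_one, one_mul] at this
  linarith

lemma FinPres.le_defP {p : ℕ} (hp : p.Prime) {G : Type*} [Group G] {n k : ℕ}
    (h : FinPres G n k) : (n : ℝ) - k ≤ defP p G := by
  obtain ⟨d, hd⟩ := h.gen
  obtain ⟨R, φ, h1, h2, h3⟩ := h
  have h4 : ∑' r : (R : Set (FreeGroup (Fin n))), ((p : ℝ) ^ (nuP p r.1))⁻¹ ≤ k := by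
    rw [tsum_fintype]
    calc _ ≤ ∑ r : (R : Set (FreeGroup (Fin n))), (1 : ℝ) := by
          refine Finset.sum_le_sum fun r _ => inv_le_one_of_one_le₀ (one_le_pow₀ ?_)
          exact_mod_cast hp.one_lt.le
      _ = R.card := by simp
      _ ≤ k := by exact_mod_cast h3
  have h5 := le_csSup (p_pres_le hp hd) ⟨n, R, φ, h1, h2, (hasSum_fintype _).summable, rfl⟩
  unfold defP
  linarith

lemma FinPres.le_deficiency {G : Type*} [Group G] {n k : ℕ}
    (h : FinPres G n k) : (n : ℝ) - k ≤ deficiency G := by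
  obtain ⟨R, φ, h1, h2, h3⟩ := h
  have h5 : (n : ℝ) - R.card ≤ deficiency G := by
    refine le_csSup ⟨defP 2 G, ?_⟩ ⟨n, R, φ, h1, h2, rfl⟩
    rintro x ⟨m, R', φ', h1', h2', rfl⟩
    exact FinPres.le_defP Nat.prime_two ⟨R', φ', h1', h2', le_rfl⟩
  have : (R.card : ℝ) ≤ k := by exact_mod_cast h3
  linarith

lemma deficiency_le {G : Type*} [Group G] {a b : ℕ} (h : FinPres G a b) {c : ℝ}
    (hc : ∀ n k, FinPres G n k → (n : ℝ) - k ≤ c) : deficiency G ≤ c := by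
  obtain ⟨R, φ, h1, h2, -⟩ := h
  refine csSup_le ⟨_, a, R, φ, h1, h2, rfl⟩ ?_
  rintro x ⟨m, R', φ', h1', h2', rfl⟩
  exact hc _ _ ⟨R', φ', h1', h2', le_rfl⟩

lemma FinPres.subgroup {G : Type*} [Group G] {n k : ℕ} (h : FinPres G n k) (L : Subgroup G)
    (hL : L.index ≠ 0) :
    ∃ n' : ℕ, n' + L.index = n * L.index + 1 ∧ FinPres L n' (k * L.index) := by
  obtain ⟨R, φ, h1, h2, h3⟩ := h
  have hM : (L.comap φ).index = L.index := Subgroup.index_comap_of_surjective L h1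
  obtain ⟨T, hT, hTg⟩ := exists_transversal (L.comap φ) (hM ▸ hL)
  obtain ⟨n', hn', R', φ', h1', h2', h3'⟩ := reidemeister_schreier h1 L hL
    (fun r : R => r.1) (by simpa using h2) (fun _ => T) (fun i g => by
      obtain ⟨l, hl, t, ht, rfl⟩ := hTg g
      exact ⟨l, hl, t, ht, by group⟩)
  refine ⟨n', hn', R', φ', h1', h2', h3'.trans ?_⟩
  simp only [Finset.sum_const, Finset.card_univ, Fintype.card_coe, smul_eq_mul, hT, hM]
  gcongr

lemma defP_le_of_normal {p : ℕ} (hp : p.Prime) {G : Type*} [Group G] {a b : ℕ}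
    (h : FinPres G a b) (L : Subgroup G) [L.Normal] (hL : L.index ≠ 0) {d : ℕ} (hd : Gen L d) :
    (L.index : ℝ) * (defP p G - 1) ≤ d - 1 := by
  obtain ⟨R, φ, h1, h2, -⟩ := h
  have h0 : (0 : ℝ) < L.index := by positivity
  have : defP p G ≤ (d - 1) / L.index + 1 := by
    refine csSup_le ⟨_, a, R, φ, h1, h2, (hasSum_fintype _).summable, rfl⟩ ?_
    rintro x ⟨m, R', φ', h1', h2', h3', rfl⟩
    have := p_bound hp h1' h2' h3' L hL hd
    rw [← sub_le_iff_le_add, le_div_iff₀ h0]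
    linarith
  rw [← sub_le_iff_le_add, le_div_iff₀ h0] at this
  linarith

lemma gen_grpRank {G : Type*} [Group G] {d : ℕ} (h : Gen G d) : Gen G (grpRank G) :=
  Nat.sInf_mem (s := {n : ℕ | ∃ S : Finset G, S.card = n ∧ Subgroup.closure (S : Set G) = ⊤}) ⟨d, h⟩

/-- Comparison of the `p`-deficiency at one subgroup with the rank at another. -/
lemma defP_le_rank {p : ℕ} (hp : p.Prime) {G : Type*} [Group G] {a b : ℕ} (h : FinPres G a b)
    (H : Subgroup G) (hH : H.index ≠ 0) (K : Subgroup G) (hK : K.index ≠ 0) :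
    (defP p H - 1) / (H.index : ℝ) ≤ ((grpRank K : ℝ) - 1) / (K.index : ℝ) := by
  obtain ⟨d₀, hd₀⟩ := h.gen
  obtain ⟨d₁, hd₁, -⟩ := gen_of_index hd₀ K hK
  have hd := gen_grpRank hd₁
  have : H.FiniteIndex := ⟨hH⟩
  have : K.FiniteIndex := ⟨hK⟩
  let L := (H ⊓ K).normalCore
  have hLf : L.FiniteIndex := inferInstance
  have hLH : L ≤ H := (Subgroup.normalCore_le _).trans inf_le_left
  have hLK : L ≤ K := (Subgroup.normalCore_le _).trans inf_le_right
  have iH : (L.subgroupOf H).index * H.index = L.index := Subgroup.relIndex_mul_index hLH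
  have iK : (L.subgroupOf K).index * K.index = L.index := Subgroup.relIndex_mul_index hLK
  have iH0 : (L.subgroupOf H).index ≠ 0 := fun h0 => hLf.index_ne_zero (by rw [← iH, h0, zero_mul])
  have iK0 : (L.subgroupOf K).index ≠ 0 := fun h0 => hLf.index_ne_zero (by rw [← iK, h0, zero_mul])
  obtain ⟨d', hd', hle⟩ := gen_of_index hd (L.subgroupOf K) iK0
  have hd'' : Gen (L.subgroupOf H) d' :=
    hd'.congr ((Subgroup.subgroupOfEquivOfLe hLK).trans (Subgroup.subgroupOfEquivOfLe hLH).symm)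
  obtain ⟨n', -, hH'⟩ := h.subgroup H hH
  have key := defP_le_of_normal hp hH' (L.subgroupOf H) iH0 hd''
  have hle' : (d' : ℝ) + (L.subgroupOf K).index ≤ grpRank K * (L.subgroupOf K).index + 1 := by
    exact_mod_cast hle
  have iH' : ((L.subgroupOf H).index : ℝ) * H.index = L.index := by exact_mod_cast iH
  have iK' : ((L.subgroupOf K).index : ℝ) * K.index = L.index := by exact_mod_cast iK
  have p1 : (0 : ℝ) < H.index := by positivity
  have p2 : (0 : ℝ) < K.index := by positivity
  have p3 : (0 : ℝ) < (L.subgroupOf H).index := by positivity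
  have p4 : (0 : ℝ) < (L.subgroupOf K).index := by positivity
  calc (defP p H - 1) / (H.index : ℝ)
      = ((L.subgroupOf H).index * (defP p H - 1)) / L.index := by rw [← iH']; field_simp
    _ ≤ ((L.subgroupOf K).index * (grpRank K - 1)) / L.index := by
      gcongr ?_ / _
      linarith
    _ = _ := by rw [← iK']; field_simp

/-- Passing to the normal core does not decrease the normalised deficiency. -/
lemma deficiency_le_defP {p : ℕ} (hp : p.Prime) {G : Type*} [Group G] {a b : ℕ}
    (h : FinPres G a b) (H : Subgroup G) (hH : H.index ≠ 0) :
    (deficiency H - 1) / (H.index : ℝ) ≤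
      (defP p H.normalCore - 1) / (H.normalCore.index : ℝ) := by
  have : H.FiniteIndex := ⟨hH⟩
  set K := H.normalCore with hKdef
  have hKf : K.FiniteIndex := inferInstance
  have hKH : K ≤ H := Subgroup.normalCore_le _
  have i1 : (K.subgroupOf H).index * H.index = K.index := Subgroup.relIndex_mul_index hKH
  have i0 : (K.subgroupOf H).index ≠ 0 := fun h0 => hKf.index_ne_zero (by rw [← i1, h0, zero_mul])
  have i1' : ((K.subgroupOf H).index : ℝ) * H.index = K.index := by exact_mod_cast i1
  have p1 : (0 : ℝ) < H.index := by positivity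
  have p2 : (0 : ℝ) < (K.subgroupOf H).index := by positivity
  obtain ⟨n', -, hH'⟩ := h.subgroup H hH
  have key : deficiency H ≤ (defP p K - 1) / (K.subgroupOf H).index + 1 := by
    refine deficiency_le hH' fun n k hnk => ?_
    obtain ⟨m, hm, hm'⟩ := hnk.subgroup (K.subgroupOf H) i0
    have h1 := (hm'.congr (Subgroup.subgroupOfEquivOfLe hKH)).le_defP hp
    have h2 : (m : ℝ) + (K.subgroupOf H).index = n * (K.subgroupOf H).index + 1 := by
      exact_mod_cast hm
    push_cast at h1
    rw [← sub_le_iff_le_add, le_div_iff₀ p2]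
    linarith
  rw [div_le_iff₀ p1]
  calc deficiency H - 1 ≤ (defP p K - 1) / (K.subgroupOf H).index := by linarith
    _ = _ := by rw [← i1']; field_simp

lemma FinitelyPresentedGroup.finPres {G : Type*} [Group G] (hG : FinitelyPresentedGroup G) :
    ∃ a b, FinPres G a b := by
  obtain ⟨n, R, φ, h1, h2⟩ := hG
  exact ⟨n, R.card, R, φ, h1, h2, le_rfl⟩

lemma DGp_le_RG {p : ℕ} (hp : p.Prime) {G : Type*} [Group G] (hG : FinitelyPresentedGroup G) :
    DGp p G ≤ RG G := by
  obtain ⟨a, b, h⟩ := hG.finPres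
  refine csSup_le ⟨_, ⊤, inferInstance, by simp, rfl⟩ ?_
  rintro x ⟨H, -, hH, rfl⟩
  refine le_csInf ⟨_, ⊤, by simp, rfl⟩ ?_
  rintro y ⟨K, hK, rfl⟩
  exact defP_le_rank hp h H hH K hK

lemma le_DGp {p : ℕ} (hp : p.Prime) {G : Type*} [Group G] (hG : FinitelyPresentedGroup G)
    (H : Subgroup G) (hH : H.index ≠ 0) : (deficiency H - 1) / (H.index : ℝ) ≤ DGp p G := by
  obtain ⟨a, b, h⟩ := hG.finPres
  refine (deficiency_le_defP hp h H hH).trans (le_csSup ?_ ?_)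
  · refine ⟨((grpRank (⊤ : Subgroup G) : ℝ) - 1) / ((⊤ : Subgroup G).index : ℝ), ?_⟩
    rintro x ⟨K, -, hK, rfl⟩
    exact defP_le_rank hp h K hK ⊤ (by simp)
  · have : H.FiniteIndex := ⟨hH⟩
    exact ⟨H.normalCore, inferInstance, Subgroup.FiniteIndex.index_ne_zero, rfl⟩

lemma DG_le_DGp {p : ℕ} (hp : p.Prime) {G : Type*} [Group G] (hG : FinitelyPresentedGroup G) :
    DG G ≤ DGp p G := by
  refine csSup_le ⟨_, ⊤, by simp, rfl⟩ ?_
  rintro x ⟨H, hH, rfl⟩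
  exact le_DGp hp hG H hH

lemma le_DG {G : Type*} [Group G] (hG : FinitelyPresentedGroup G)
    (H : Subgroup G) (hH : H.index ≠ 0) : (deficiency H - 1) / (H.index : ℝ) ≤ DG G := by
  refine le_csSup ⟨DGp 2 G, ?_⟩ ⟨H, hH, rfl⟩
  rintro x ⟨K, hK, rfl⟩
  exact le_DGp Nat.prime_two hG K hK

/-! ### The residual deficiency -/

/-- A nontrivial element of a free group is a positive power of an element which is not a
proper power. -/
lemma exists_root {α : Type*} (r : FreeGroup α) (hr : r ≠ 1) :
    ∃ (u : FreeGroup α) (m : ℕ), 1 ≤ m ∧ NotProperPower u ∧ u ^ m = r := by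
  -- the exponent of a power is bounded by its length
  have hb : ∀ (v : FreeGroup α) (k : ℕ), r = v ^ k → k ≤ r.norm := by
    intro v k hk
    have hk0 : k ≠ 0 := fun h => hr (by rw [hk, h, pow_zero])
    have hv : v ≠ 1 := fun h => hr (by rw [hk, h, one_pow])
    have h1 : FreeGroup.mk (List.replicate k v.toWord).flatten = r := by
      rw [hk, ← FreeGroup.pow_mk, FreeGroup.mk_toWord]
    have h2 := FreeGroup.reduceCyclically.reduce_flatten_replicate (L := v.toWord)
      FreeGroup.isReduced_toWord k
    rw [if_neg hk0] at h2
    rw [FreeGroup.norm, ← h1, FreeGroup.toWord_mk, h2]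
    have h3 : FreeGroup.reduceCyclically v.toWord ≠ [] := by
      intro h0
      apply hv
      have h4 := FreeGroup.reduceCyclically.conj_conjugator_reduceCyclically v.toWord
      rw [h0, List.append_nil] at h4
      rw [← FreeGroup.mk_toWord (x := v), ← h4, ← FreeGroup.mul_mk, ← FreeGroup.inv_mk,
        mul_inv_cancel]
    have h5 : 1 ≤ (FreeGroup.reduceCyclically v.toWord).length :=
      List.length_pos_iff.mpr h3
    simp only [List.length_append, List.length_flatten, List.map_replicate, List.sum_replicate,
      smul_eq_mul]
    nlinarith
  let P : ℕ → Prop := fun k => ∃ v : FreeGroup α, r = v ^ k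
  have hP1 : P 1 := ⟨r, by simp⟩
  have hP : ∀ k, P k → k ≤ r.norm := fun k ⟨v, hv⟩ => hb v k hv
  have hPm : P (Nat.findGreatest P r.norm) := Nat.findGreatest_spec (hP 1 hP1) hP1
  have hmax : ∀ k, P k → k ≤ Nat.findGreatest P r.norm := fun k hk =>
    Nat.le_findGreatest (hP k hk) hk
  have hm1 := hmax 1 hP1
  generalize Nat.findGreatest P r.norm = m at hPm hmax hm1
  obtain ⟨u, hu⟩ := hPm
  refine ⟨u, m, hm1, fun v k hk => ?_, hu.symm⟩
  have h1 : r = v ^ (k * m) := by rw [hu, hk, pow_mul]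
  have h2 := hmax _ ⟨v, h1⟩
  have h3 : k * m ≠ 0 := fun h => hr (by rw [h1, h, pow_zero])
  have h4 : k ≠ 0 := fun h => h3 (by rw [h, zero_mul])
  have h5 : k ≤ 1 := by
    by_contra h
    nlinarith
  omega

/-- Finitely many orders in `G` modulo the finite residual are all realised in a single finite
quotient of `G`. -/
lemma exists_normal_orderOf {G : Type*} [Group G] {s : ℕ} (x : Fin s → G)
    (hx : ∀ i, ∃ m, 1 ≤ m ∧ x i ^ m = 1) :
    ∃ (K : Subgroup G) (_ : K.Normal), K.index ≠ 0 ∧ ∀ i,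
      orderOf ((x i : G) : G ⧸ K) = orderIn (finiteResidual G) (x i) := by
  have hne : ∀ i, {j : ℕ | 0 < j ∧ x i ^ j ∈ finiteResidual G}.Nonempty := fun i => by
    obtain ⟨m, hm, hm'⟩ := hx i
    exact ⟨m, hm, by rw [hm']; exact one_mem _⟩
  have hmem : ∀ i, 0 < orderIn (finiteResidual G) (x i) ∧
      x i ^ orderIn (finiteResidual G) (x i) ∈ finiteResidual G := fun i => Nat.sInf_mem (hne i)
  -- a finite index subgroup avoiding each nontrivial power of `x i` below the order
  have hav : ∀ g : G, ∃ H : Subgroup G, H.index ≠ 0 ∧ (g ∈ H → g ∈ finiteResidual G) := fun g => by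
    by_cases hg : g ∈ finiteResidual G
    · exact ⟨⊤, by simp, fun _ => hg⟩
    · have hg' := hg
      simp only [finiteResidual, Subgroup.mem_iInf, not_forall] at hg
      obtain ⟨H, hH, hgH⟩ := hg
      exact ⟨H, hH, fun h => absurd h hgH⟩
  choose H hH hHg using hav
  let D : Subgroup G := ⨅ i : Fin s, ⨅ j : Fin (orderIn (finiteResidual G) (x i)), H (x i ^ j.1)
  have hD : D.FiniteIndex := by
    refine Subgroup.finiteIndex_iInf fun i => Subgroup.finiteIndex_iInf fun j => ⟨hH _⟩
  refine ⟨D.normalCore, inferInstance, Subgroup.FiniteIndex.index_ne_zero, fun i => ?_⟩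
  have hle : finiteResidual G ≤ D.normalCore :=
    iInf₂_le (f := fun (H : Subgroup G) (_ : H.index ≠ 0) => H) D.normalCore
      Subgroup.FiniteIndex.index_ne_zero
  rw [orderOf_eq_iff (hmem i).1]
  refine ⟨?_, fun j hj hj0 h => ?_⟩
  · rw [← QuotientGroup.mk_pow, QuotientGroup.eq_one_iff]
    exact hle (hmem i).2
  · rw [← QuotientGroup.mk_pow, QuotientGroup.eq_one_iff] at h
    have h1 : x i ^ j ∈ D := Subgroup.normalCore_le _ h
    have h2 : x i ^ j ∈ H (x i ^ j) := by
      simp only [D, Subgroup.mem_iInf] at h1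
      exact h1 i ⟨j, hj⟩
    have h3 : orderIn (finiteResidual G) (x i) ≤ j := Nat.sInf_le ⟨hj0, hHg _ h2⟩
    omega

lemma rdef_le_DG {G : Type*} [Group G] (hG : FinitelyPresentedGroup G) : rdef G - 1 ≤ DG G := by
  rw [sub_le_iff_le_add]
  refine csSup_le ?_ ?_
  · obtain ⟨n, R, φ, h1, h2⟩ := hG
    let R' := R.erase 1
    choose! u m hm hu hum using fun (r : FreeGroup (Fin n)) (hr : r ≠ 1) => exists_root r hr
    have hne : ∀ i, (R'.equivFin.symm i : FreeGroup (Fin n)) ≠ 1 := fun i =>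
      Finset.ne_of_mem_erase (R'.equivFin.symm i).2
    refine ⟨_, n, R'.card, fun i => u (R'.equivFin.symm i), fun i => m (R'.equivFin.symm i), φ,
      fun i => hm _ (hne i), fun i => hu _ (hne i), h1, ?_, rfl⟩
    have h3 : Set.range (fun i => u (R'.equivFin.symm i) ^ m (R'.equivFin.symm i)) = (R' : Set _) := by
      ext x
      constructor
      · rintro ⟨i, rfl⟩
        simp only [hum _ (hne i)]
        exact (R'.equivFin.symm i).2
      · intro hx
        refine ⟨R'.equivFin ⟨x, hx⟩, ?_⟩
        simp only [Equiv.symm_apply_apply]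
        exact hum _ (Finset.ne_of_mem_erase hx)
    rw [h3, h2]
    apply le_antisymm
    · refine Subgroup.normalClosure_le_normal fun x hx => ?_
      by_cases hx1 : x = 1
      · rw [hx1]; exact one_mem _
      · exact Subgroup.subset_normalClosure (Finset.mem_coe.mpr (Finset.mem_erase.mpr ⟨hx1, hx⟩))
    · exact Subgroup.normalClosure_mono (by simp [R'])
  · rintro x ⟨n, s, u, m, φ, hm, -, hφ, hker, rfl⟩
    have hum : ∀ i, φ (u i ^ m i) = 1 := fun i => by
      rw [← MonoidHom.mem_ker, hker]
      exact Subgroup.subset_normalClosure ⟨i, rfl⟩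
    obtain ⟨K, hKn, hK, hKo⟩ := exists_normal_orderOf (fun i => φ (u i))
      fun i => ⟨m i, hm i, by rw [← map_pow, hum]⟩
    have hM : (K.comap φ).index = K.index := Subgroup.index_comap_of_surjective K hφ
    choose T hT hTg using fun i => exists_double_transversal (K.comap φ) (hM ▸ hK) (u i)
    obtain ⟨n', hn', hpres⟩ := reidemeister_schreier hφ K hK (fun i => u i ^ m i) hker T
      (fun i g => by
        obtain ⟨l, hl, t, ht, k, rfl⟩ := hTg i g
        refine ⟨l, hl, t, ht, ?_⟩
        have h1 : u i ^ k * u i ^ m i * (u i ^ k)⁻¹ = u i ^ m i := by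
          have : Commute (u i ^ k) (u i ^ m i) :=
            ((Commute.refl (u i)).zpow_left k).pow_right (m i)
          rw [this.eq, mul_inv_cancel_right]
        conv_rhs => rw [← h1]
        group)
    have ho : ∀ i, orderOf (u i : FreeGroup (Fin n) ⧸ K.comap φ)
        = orderIn (finiteResidual G) (φ (u i)) := fun i => by
      rw [← hKo i]
      refine orderOf_eq_orderOf_iff.mpr fun j => ?_
      rw [← QuotientGroup.mk_pow, ← QuotientGroup.mk_pow, QuotientGroup.eq_one_iff,
        QuotientGroup.eq_one_iff, Subgroup.mem_comap, map_pow]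
    have hTc : ∀ i, ((T i).card : ℝ) =
        K.index * ((orderIn (finiteResidual G) (φ (u i)) : ℝ))⁻¹ := fun i => by
      have h1 := hT i
      rw [ho, hM] at h1
      have h2 : orderIn (finiteResidual G) (φ (u i)) ≠ 0 := fun h => hK (by rw [← h1, h, mul_zero])
      rw [← h1]
      push_cast
      rw [mul_assoc, mul_inv_cancel₀ (by exact_mod_cast h2), mul_one]
    have h1 := hpres.le_deficiency
    have h2 := le_DG hG K hK
    have h3 : (n' : ℝ) + K.index = n * K.index + 1 := by exact_mod_cast hn'
    have h0 : (0 : ℝ) < K.index := by positivity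
    rw [div_le_iff₀ h0] at h2
    push_cast at h1
    simp only [hTc] at h1
    rw [← Finset.mul_sum] at h1
    rw [← sub_le_iff_le_add]
    refine le_of_mul_le_mul_right ?_ h0
    linarith

/-! ### The Baumslag–Pride theorem -/

/-- The homomorphism from the free group on `t = none` and `y i = some i` to the wreath product
`⟨a, b⟩ ≀ᵣ Q` sending `t` to the shift by `q` decorated with a single `a` at the position `1`, and
`y i` to the function `x ↦ b ^ c i x`. -/
noncomputable def bpHom {n : ℕ} {Q : Type} [CommGroup Q] (q : Q) (c : Fin n × Q → ℤ) :
    FreeGroup (Option (Fin n)) →* FreeGroup (Fin 2) ≀ᵣ Q :=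
  FreeGroup.lift fun o => o.elim ⟨fun x => if x = 1 then FreeGroup.of 0 else 1, q⟩
    fun i => ⟨fun x => FreeGroup.of 1 ^ c (i, x), 1⟩

lemma bpHom_none {n : ℕ} {Q : Type} [CommGroup Q] (q : Q) (c : Fin n × Q → ℤ) :
    bpHom q c (FreeGroup.of none) = ⟨fun x => if x = 1 then FreeGroup.of 0 else 1, q⟩ := by
  simp [bpHom]

lemma bpHom_some {n : ℕ} {Q : Type} [CommGroup Q] (q : Q) (c : Fin n × Q → ℤ) (i : Fin n) :
    bpHom q c (FreeGroup.of (some i)) = ⟨fun x => FreeGroup.of 1 ^ c (i, x), 1⟩ := by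
  simp [bpHom]

/-- The exponent sum of the generator `i`. -/
noncomputable def expSum {κ : Type*} (i : κ) : FreeGroup κ →* Multiplicative ℤ :=
  FreeGroup.lift fun j => Multiplicative.ofAdd (if j = i then 1 else 0)

lemma expSum_self {κ : Type*} (i : κ) (k : ℤ) :
    expSum i (FreeGroup.of i ^ k) = Multiplicative.ofAdd k := by
  rw [map_zpow, expSum, FreeGroup.lift_apply_of, if_pos rfl, ← ofAdd_zsmul, smul_eq_mul, mul_one]

lemma expSum_of_ne {κ : Type*} {i j : κ} (h : j ≠ i) : expSum i (FreeGroup.of j) = 1 := by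
  simp [expSum, h]

lemma eq_one_of_expSum {κ : Type*} (i : κ) {g : FreeGroup κ}
    (hg : g ∈ Subgroup.zpowers (FreeGroup.of i)) (h : expSum i g = 1) : g = 1 := by
  obtain ⟨k, rfl⟩ := Subgroup.mem_zpowers_iff.mp hg
  rw [expSum_self] at h
  have : k = 0 := Multiplicative.ofAdd.injective h
  simp [this]

/-- Locality: if the `c i` vanish within distance `M` from the position `1`, then the values of
`bpHom q c v` are powers of `a` near `1` and powers of `b` away from `1`. -/
lemma bpHom_local {n : ℕ} (v : FreeGroup (Option (Fin n))) : ∃ S : ℕ,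
    ∀ (Q : Type) [CommGroup Q] (q : Q) (c : Fin n × Q → ℤ) (M : ℕ),
    (∀ i (k : ℤ), k.natAbs ≤ M → c (i, q ^ k) = 0) →
    (∀ k : ℤ, k.natAbs + S ≤ M →
      (bpHom q c v).left (q ^ k) ∈ Subgroup.zpowers (FreeGroup.of (0 : Fin 2))) ∧
    (∀ x, (∀ k : ℤ, k.natAbs ≤ S → x ≠ q ^ k) →
      (bpHom q c v).left x ∈ Subgroup.zpowers (FreeGroup.of (1 : Fin 2))) ∧
    ∃ k : ℤ, k.natAbs ≤ S ∧ (bpHom q c v).right = q ^ k := by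
  induction v using FreeGroup.induction_on with
  | C1 => exact ⟨0, fun Q _ q c M hc => by simp⟩
  | of o =>
    refine ⟨1, fun Q _ q c M hc => ?_⟩
    cases o with
    | none =>
      rw [bpHom_none]
      refine ⟨fun k _ => ?_, fun x hx => ?_, 1, by simp, by simp⟩
      · by_cases h : q ^ k = 1 <;> simp [h]
      · have : x ≠ 1 := by simpa using hx 0 (by simp)
        simp [this]
    | some i =>
      rw [bpHom_some]
      refine ⟨fun k hk => ?_, fun x hx => ?_, 0, by simp, by simp⟩
      · simp [hc i k (by omega)]
      · exact Subgroup.zpow_mem_zpowers _ _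
  | inv_of o ih =>
    obtain ⟨S, ih⟩ := ih
    refine ⟨S + S, fun Q _ q c M hc => ?_⟩
    obtain ⟨h1, h2, k, hk, hkr⟩ := ih Q q c M hc
    rw [map_inv]
    simp only [RegularWreathProduct.inv_left, RegularWreathProduct.inv_right, hkr, Pi.inv_apply,
      inv_mem_iff]
    refine ⟨fun l hl => ?_, fun x hx => ?_, -k, by simp; omega, by simp⟩
    · rw [← zpow_add]
      exact h1 _ (by omega)
    · refine h2 _ fun l hl he => hx (l - k) (by omega) ?_
      rw [zpow_sub, ← he, mul_comm, inv_mul_cancel_left]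
  | mul u v hu hv =>
    obtain ⟨S, hu⟩ := hu
    obtain ⟨T, hv⟩ := hv
    refine ⟨S + T, fun Q _ q c M hc => ?_⟩
    obtain ⟨h1, h2, k, hk, hkr⟩ := hu Q q c M hc
    obtain ⟨h3, h4, k', hk', hkr'⟩ := hv Q q c M hc
    rw [map_mul]
    simp only [RegularWreathProduct.mul_left, RegularWreathProduct.mul_right, hkr, hkr',
      Pi.mul_apply]
    refine ⟨fun l hl => ?_, fun x hx => ?_, k + k', by omega, by rw [zpow_add]⟩
    · refine mul_mem (h1 _ (by omega)) ?_
      rw [← zpow_neg, ← zpow_add]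
      exact h3 _ (by omega)
    · refine mul_mem (h2 _ fun l hl => hx l (by omega)) (h4 _ fun l hl he => ?_)
      refine hx (k + l) (by omega) ?_
      rw [zpow_add, ← he, mul_inv_cancel_left]

/-- The exponents of `a` only depend on the exponent sum of `t`. -/
lemma bpHom_expSum_zero {n : ℕ} {Q : Type} [CommGroup Q] (q : Q) (c : Fin n × Q → ℤ)
    (v : FreeGroup (Option (Fin n))) :
    (∀ x, expSum 0 ((bpHom q c v).left x) =
      expSum 0 ((bpHom q c (FreeGroup.of none ^ (expSum none v).toAdd)).left x)) ∧
    (bpHom q c v).right = (bpHom q c (FreeGroup.of none ^ (expSum none v).toAdd)).right := by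
  induction v using FreeGroup.induction_on with
  | C1 => simp
  | of o =>
    cases o with
    | none => rw [← zpow_one (FreeGroup.of none), expSum_self]; simp
    | some i =>
      rw [expSum_of_ne (by simp), toAdd_one, zpow_zero, map_one, bpHom_some]
      have : expSum (0 : Fin 2) (FreeGroup.of 1) = 1 := expSum_of_ne (by decide)
      simp [this]
  | inv_of o ih =>
    rw [map_inv, map_inv, toAdd_inv, zpow_neg, map_inv]
    simp [ih.1, ih.2]
  | mul u v hu hv =>
    rw [map_mul, map_mul, toAdd_mul, zpow_add, map_mul]
    simp [hu.1, hu.2, hv.1, hv.2]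

/-- The exponents of `b` are additive in `c`. -/
lemma bpHom_add {n : ℕ} {Q : Type} [CommGroup Q] (q : Q) (c c' : Fin n × Q → ℤ)
    (v : FreeGroup (Option (Fin n))) :
    (∀ x, expSum 1 ((bpHom q (c + c') v).left x) =
      expSum 1 ((bpHom q c v).left x) * expSum 1 ((bpHom q c' v).left x)) ∧
    (bpHom q (c + c') v).right = (bpHom q c v).right ∧
    (bpHom q (c + c') v).right = (bpHom q c' v).right := by
  induction v using FreeGroup.induction_on with
  | C1 => simp
  | of o =>
    cases o with
    | none =>
      have : expSum (1 : Fin 2) (FreeGroup.of 0) = 1 := expSum_of_ne (by decide)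
      simp [bpHom_none, apply_ite (expSum (1 : Fin 2)), this]
    | some i =>
      simp [bpHom_some, expSum_self, -map_zpow, ofAdd_add]
  | inv_of o ih =>
    obtain ⟨h1, h2, h3⟩ := ih
    simp only [map_inv, RegularWreathProduct.inv_left, RegularWreathProduct.inv_right,
      Pi.inv_apply, h1, ← h2, ← h3, mul_inv]
    simp
  | mul u v hu hv =>
    obtain ⟨h1, h2, h3⟩ := hu
    obtain ⟨h4, h5, h6⟩ := hv
    simp only [map_mul, RegularWreathProduct.mul_left, RegularWreathProduct.mul_right,
      Pi.mul_apply, h1, h4, ← h2, ← h3, ← h5, ← h6]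
    exact ⟨fun x => mul_mul_mul_comm _ _ _ _, trivial, trivial⟩

/-- The exponent of `b` in `bpHom q c v` at the position `x`, as a linear form in `c`. -/
noncomputable def bpForm {n : ℕ} {Q : Type} [CommGroup Q] (q : Q)
    (v : FreeGroup (Option (Fin n))) (x : Q) : (Fin n × Q → ℤ) →ₗ[ℤ] ℤ :=
  (AddMonoidHom.mk' (fun c => (expSum 1 ((bpHom q c v).left x)).toAdd) fun c c' => by
    rw [(bpHom_add q c c' v).1, toAdd_mul]).toIntLinearMap

/-- An integral system with fewer equations than unknowns has a primitive solution. -/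
lemma exists_primitive {ι κ : Type*} [Fintype ι] [Fintype κ] (L : κ → (ι → ℤ) →ₗ[ℤ] ℤ)
    (h : Fintype.card κ < Fintype.card ι) :
    ∃ c : ι → ℤ, (∀ k, L k c = 0) ∧ 1 ∈ AddSubgroup.closure (Set.range c) := by
  have h1 : LinearMap.ker (LinearMap.pi L) ≠ ⊥ := fun h0 => by
    have := LinearMap.finrank_le_finrank_of_injective (LinearMap.ker_eq_bot.mp h0)
    rw [Module.finrank_fintype_fun_eq_card, Module.finrank_fintype_fun_eq_card] at this
    omega
  obtain ⟨c, hc, hc0⟩ := Submodule.exists_mem_ne_zero_of_ne_bot h1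
  have hc' : ∀ k, L k c = 0 := fun k => congrFun (LinearMap.mem_ker.mp hc) k
  obtain ⟨g, hg⟩ := Int.subgroup_cyclic (AddSubgroup.closure (Set.range c))
  rw [← AddSubgroup.zmultiples_eq_closure] at hg
  have hdiv : ∀ i, ∃ z : ℤ, z * g = c i := fun i => by
    have : c i ∈ AddSubgroup.zmultiples g := hg ▸ AddSubgroup.subset_closure ⟨i, rfl⟩
    simpa [AddSubgroup.mem_zmultiples_iff] using this
  choose d hd using hdiv
  have hcd : c = g • d := funext fun i => by simp [← hd, mul_comm]
  have hg0 : g ≠ 0 := fun h0 => hc0 (by rw [hcd, h0, zero_smul])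
  refine ⟨d, fun k => ?_, ?_⟩
  · have := hc' k
    rw [hcd, map_smul, smul_eq_mul] at this
    exact (mul_eq_zero.mp this).resolve_left hg0
  · have h2 : g ∈ AddSubgroup.closure (Set.range c) := hg ▸ AddSubgroup.mem_zmultiples g
    have h3 : AddSubgroup.closure (Set.range c) =
        (AddSubgroup.closure (Set.range d)).map (AddMonoidHom.mulLeft g) := by
      rw [AddMonoidHom.map_closure, ← Set.range_comp]
      congr 2
    rw [h3] at h2
    obtain ⟨z, hz, hzg⟩ := h2
    have : z = 1 := mul_left_cancel₀ hg0 (by simpa using hzg)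
    exact this ▸ hz

lemma bpHom_left_mem {n : ℕ} {Q : Type} [CommGroup Q] (q : Q) (c : Fin n × Q → ℤ) (j : ℕ)
    (x : Q) : (bpHom q c (FreeGroup.of none ^ j)).left x ∈
      Subgroup.zpowers (FreeGroup.of (0 : Fin 2)) := by
  induction j generalizing x with
  | zero => simp
  | succ j ih =>
    rw [pow_succ, map_mul, RegularWreathProduct.mul_left, Pi.mul_apply, bpHom_none]
    refine mul_mem (ih x) ?_
    dsimp only
    split_ifs
    · exact Subgroup.mem_zpowers _
    · exact one_mem _

lemma bpHom_right_pow {n : ℕ} {Q : Type} [CommGroup Q] (q : Q) (c : Fin n × Q → ℤ) (j : ℕ) :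
    (bpHom q c (FreeGroup.of none ^ j)).right = q ^ j := by
  induction j with
  | zero => simp
  | succ j ih => rw [pow_succ, map_mul, RegularWreathProduct.mul_right, ih, bpHom_none, pow_succ]

lemma bpHom_left_one {n : ℕ} {Q : Type} [CommGroup Q] (q : Q) (c : Fin n × Q → ℤ) (j : ℕ)
    (hj : j < orderOf q) : (bpHom q c (FreeGroup.of none ^ (j + 1))).left 1 =
      FreeGroup.of (0 : Fin 2) := by
  induction j with
  | zero => simp [bpHom_none]
  | succ j ih =>
    rw [pow_succ, map_mul, RegularWreathProduct.mul_left, Pi.mul_apply, ih (by omega),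
      bpHom_none, bpHom_right_pow]
    have : q ^ (j + 1) ≠ 1 := pow_ne_one_of_lt_orderOf (by omega) hj
    simp [this]

/-- Evaluation at the position `1`, on the elements of a wreath product over trivial shifts. -/
def wreathEval {H D Q : Type*} [Group H] [Group D] [Group Q] (ψ : H →* D ≀ᵣ Q) :
    (RegularWreathProduct.rightHom.comp ψ).ker →* D where
  toFun k := (ψ k).left 1
  map_one' := by simp
  map_mul' k l := by
    have : (ψ k).right = 1 := k.2
    simp [this]

/-- If the `c i` are jointly primitive, evaluation at the position `1` is surjective. -/
lemma bpHom_surjective {n : ℕ} {Q : Type} [CommGroup Q] [Finite Q] (q : Q)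
    (hq : ∀ x, x ∈ Subgroup.zpowers q) (c : Fin n × Q → ℤ)
    (hc : 1 ∈ AddSubgroup.closure (Set.range c)) :
    Function.Surjective (wreathEval (bpHom q c)) := by
  rw [← MonoidHom.range_eq_top]
  set P := (wreathEval (bpHom q c)).range with hP
  have hmem : ∀ k, (bpHom q c k).right = 1 → (bpHom q c k).left 1 ∈ P := fun k hk =>
    ⟨⟨k, hk⟩, rfl⟩
  have ha : FreeGroup.of (0 : Fin 2) ∈ P := by
    have h0 : 0 < orderOf q := orderOf_pos q
    rw [← bpHom_left_one q c (orderOf q - 1) (by omega)]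
    refine hmem _ ?_
    rw [bpHom_right_pow, Nat.sub_add_cancel h0, pow_orderOf_eq_one]
  have hz : Subgroup.zpowers (FreeGroup.of (0 : Fin 2)) ≤ P := by simpa using ha
  have hb : ∀ p, FreeGroup.of (1 : Fin 2) ^ c p ∈ P := by
    rintro ⟨i, x⟩
    -- conjugate `y i` by a power of `t` carrying `x` to `1`
    obtain ⟨j, hj⟩ := (mem_powers_iff_mem_zpowers.mpr (hq x⁻¹))
    have hj' : q ^ j = x⁻¹ := hj
    set s := bpHom q c (FreeGroup.of none ^ j) with hs
    have hsr : s.right = x⁻¹ := by rw [hs, bpHom_right_pow, hj']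
    have h1 := hmem (FreeGroup.of none ^ j * FreeGroup.of (some i) * (FreeGroup.of none ^ j)⁻¹)
      (by simp only [map_mul, map_inv, ← hs, bpHom_some]; simp)
    simp only [map_mul, map_inv, ← hs, bpHom_some] at h1
    have h2 : s.left 1 ∈ P := hz (bpHom_left_mem q c j 1)
    simp only [RegularWreathProduct.mul_left, RegularWreathProduct.inv_left,
      RegularWreathProduct.mul_right, Pi.mul_apply, hsr, Pi.inv_apply] at h1
    simp only [inv_inv, mul_one, inv_mul_cancel] at h1
    rw [P.mul_mem_cancel_right (P.inv_mem h2), P.mul_mem_cancel_left h2] at h1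
    exact h1
  have hb1 : FreeGroup.of (1 : Fin 2) ∈ P := by
    have h1 : AddSubgroup.closure (Set.range c) ≤
        (P.comap (zpowersHom _ (FreeGroup.of (1 : Fin 2)))).toAddSubgroup' := by
      rw [AddSubgroup.closure_le]
      rintro _ ⟨p, rfl⟩
      exact hb p
    simpa using h1 hc
  rw [eq_top_iff, ← FreeGroup.closure_range_of, Subgroup.closure_le]
  rintro _ ⟨i, rfl⟩
  fin_cases i
  · exact ha
  · exact hb1

/-- Fewer than `n` elements of exponent sum zero in `t` can be killed by a `bpHom` with
surjective evaluation: the exponents of `b` to be annihilated form a linear system in which the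
number of unknowns grows faster with `|Q|` than the number of equations. -/
lemma exists_bpHom {n : ℕ} {κ : Type*} [Fintype κ] (V : κ → FreeGroup (Option (Fin n)))
    (hV : ∀ k, expSum none (V k) = 1) (hκ : Fintype.card κ < n) :
    ∃ (Q : Type) (_ : CommGroup Q) (_ : Finite Q) (Φ : FreeGroup (Option (Fin n)) →*
      FreeGroup (Fin 2) ≀ᵣ Q), (∀ k, Φ (V k) = 1) ∧ Function.Surjective (wreathEval Φ) := by
  choose S hS using fun k => bpHom_local (V k)
  let M := ∑ k, (S k + S k)
  have hSM : ∀ k, S k + S k ≤ M := fun k =>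
    Finset.single_le_sum (f := fun k => S k + S k) (fun _ _ => Nat.zero_le _) (Finset.mem_univ k)
  let N := n * (2 * M + 1) + 1
  obtain ⟨Q, _, _, hQ, q, hq⟩ : ∃ (Q : Type) (_ : CommGroup Q) (_ : Fintype Q),
      Fintype.card Q = N ∧ ∃ q : Q, ∀ x, x ∈ Subgroup.zpowers q := by
    refine ⟨Multiplicative (ZMod N), inferInstance, inferInstance, ?_, Multiplicative.ofAdd 1,
      fun x => ⟨(x.toAdd.val : ℤ), ?_⟩⟩
    · rw [Fintype.card_multiplicative, ZMod.card]
    · apply Multiplicative.toAdd.injective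
      change ((x.toAdd.val : ℤ)) • (1 : ZMod N) = x.toAdd
      simp
  let L : (κ × Q) ⊕ (Fin n × Fin (2 * M + 1)) → (Fin n × Q → ℤ) →ₗ[ℤ] ℤ :=
    Sum.elim (fun p => bpForm q (V p.1) p.2)
      fun p => LinearMap.proj (p.1, q ^ ((p.2 : ℤ) - M))
  obtain ⟨c, hc, hc1⟩ := exists_primitive L (by
    simp only [Fintype.card_sum, Fintype.card_prod, Fintype.card_fin, hQ]
    have : (Fintype.card κ + 1) * N ≤ n * N := Nat.mul_le_mul_right _ hκ
    rw [add_mul, one_mul] at this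
    omega)
  have hc0 : ∀ i (k : ℤ), k.natAbs ≤ M → c (i, q ^ k) = 0 := fun i k hk => by
    have := hc (Sum.inr (i, ⟨(k + M).toNat, by omega⟩))
    have e : (((k + M).toNat : ℕ) : ℤ) - M = k := by omega
    simpa only [L, Sum.elim_inr, LinearMap.proj_apply, e] using this
  refine ⟨Q, inferInstance, inferInstance, bpHom q c, fun k => ?_, bpHom_surjective q hq c hc1⟩
  obtain ⟨h1, h2, -⟩ := hS k Q q c M hc0
  have h3 := bpHom_expSum_zero q c (V k)
  simp only [hV, toAdd_one, zpow_zero, map_one, RegularWreathProduct.one_left, Pi.one_apply] at h3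
  refine RegularWreathProduct.ext (funext fun x => ?_) h3.2
  by_cases hx : ∃ l : ℤ, l.natAbs ≤ S k ∧ x = q ^ l
  · obtain ⟨l, hl, rfl⟩ := hx
    exact eq_one_of_expSum 0 (h1 l (by have := hSM k; omega)) (h3.1 _)
  · push Not at hx
    refine eq_one_of_expSum 1 (h2 x hx) ?_
    exact Multiplicative.toAdd.injective (hc (Sum.inl (k, x)))

/-- The Baumslag–Pride theorem. -/
lemma large_of_deficiency {H : Type*} [Group H] {n k : ℕ} (h : FinPres H n k) (hk : k + 2 ≤ n) :
    Large H := by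
  obtain ⟨R, φ, hφ, hker, hR⟩ := h
  -- a surjection onto `ℤ`
  obtain ⟨e, he, he1⟩ := exists_primitive (ι := Fin n) (κ := R)
    (fun r => (AddMonoidHom.mk' (fun e : Fin n → ℤ =>
      (FreeGroup.lift (fun i => Multiplicative.ofAdd (e i)) r.1).toAdd) (fun e e' => by
        have : FreeGroup.lift (fun i => Multiplicative.ofAdd ((e + e') i)) =
            FreeGroup.lift (fun i => Multiplicative.ofAdd (e i)) *
            FreeGroup.lift (fun i => Multiplicative.ofAdd (e' i)) := by
          ext i; simp
        rw [this]; rfl)).toIntLinearMap) (by simp; omega)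
  let θ : FreeGroup (Fin n) →* Multiplicative ℤ :=
    FreeGroup.lift fun i => Multiplicative.ofAdd (e i)
  have hθ : ∀ r ∈ R, θ r = 1 := fun r hr => Multiplicative.toAdd.injective (he ⟨r, hr⟩)
  obtain ⟨w, hw⟩ : ∃ w, θ w = Multiplicative.ofAdd 1 := by
    have h1 : AddSubgroup.closure (Set.range e) ≤ θ.range.toAddSubgroup' := by
      rw [AddSubgroup.closure_le]
      rintro _ ⟨p, rfl⟩
      exact ⟨FreeGroup.of p, FreeGroup.lift_apply_of⟩
    exact h1 he1
  let α : FreeGroup (Fin n) →* FreeGroup (Option (Fin n)) :=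
    FreeGroup.lift fun i => FreeGroup.of (some i) * FreeGroup.of none ^ e i
  have hα : (expSum none).comp α = θ := by
    ext i
    simp [α, θ, expSum_self, -map_zpow, expSum_of_ne]
  have hα' : ∀ g, expSum none (α g) = θ g := fun g => DFunLike.congr_fun hα g
  let V : Option R → FreeGroup (Option (Fin n)) := fun o =>
    o.elim (α w * (FreeGroup.of none)⁻¹) fun r => α r
  obtain ⟨Q, _, _, Φ, hΦ, hs⟩ := exists_bpHom V (by
    rintro (_ | r)
    · have : expSum (none : Option (Fin n)) (FreeGroup.of none) = Multiplicative.ofAdd 1 := by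
        simpa using expSum_self (none : Option (Fin n)) 1
      simp [V, hα', hw, this]
    · simp [V, hα', hθ r.1 r.2]) (by simp; omega)
  have hle : φ.ker ≤ (Φ.comp α).ker := by
    rw [hker]
    exact Subgroup.normalClosure_le_normal fun r hr => hΦ (some ⟨r, hr⟩)
  let ψ : H →* FreeGroup (Fin 2) ≀ᵣ Q := φ.liftOfSurjective hφ ⟨Φ.comp α, hle⟩
  have hψ : ∀ g, ψ (φ g) = Φ (α g) := fun g =>
    φ.liftOfRightInverse_comp_apply _ (Function.rightInverse_surjInv hφ) ⟨Φ.comp α, hle⟩ g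
  have hrange : ∀ v, Φ v ∈ ψ.range := by
    have ht : Φ (FreeGroup.of none) ∈ ψ.range := by
      have := hΦ none
      simp only [V, Option.elim_none, map_mul, map_inv, mul_inv_eq_one] at this
      exact ⟨φ w, by rw [hψ, this]⟩
    intro v
    induction v using FreeGroup.induction_on with
    | C1 => rw [map_one]; exact one_mem _
    | of o =>
      cases o with
      | none => exact ht
      | some i =>
        have h1 : Φ (α (FreeGroup.of i)) ∈ ψ.range := ⟨φ (FreeGroup.of i), hψ _⟩
        simp only [α, FreeGroup.lift_apply_of, map_mul, map_zpow] at h1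
        exact (Subgroup.mul_mem_cancel_right _ (zpow_mem ht _)).mp h1
    | inv_of o ih => rw [map_inv]; exact inv_mem ih
    | mul u v hu hv => rw [map_mul]; exact mul_mem hu hv
  refine ⟨(RegularWreathProduct.rightHom.comp ψ).ker, ?_, wreathEval ψ, fun z => ?_⟩
  · rw [Subgroup.index_ker]
    exact Nat.card_pos.ne'
  · obtain ⟨⟨v, hv⟩, rfl⟩ := hs z
    obtain ⟨g, hg⟩ := hrange v
    refine ⟨⟨g, ?_⟩, ?_⟩
    · have : (Φ v).right = 1 := hv
      rw [MonoidHom.mem_ker, MonoidHom.comp_apply, hg]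
      exact this
    · change (ψ g).left 1 = (Φ v).left 1
      rw [hg]

/-- Largeness passes to overgroups of finite index. -/
lemma Large.of_subgroup {G : Type*} [Group G] {H : Subgroup G} (hH : H.index ≠ 0)
    (h : Large H) : Large G := by
  obtain ⟨K, hK, f, hf⟩ := h
  refine ⟨K.map H.subtype, ?_, f.comp
    (K.equivMapOfInjective H.subtype H.subtype_injective).symm.toMonoidHom, ?_⟩
  · rw [Subgroup.index_map_subtype]
    exact mul_ne_zero hK hH
  · exact hf.comp (MulEquiv.surjective _)

lemma large_of_DG {G : Type*} [Group G] (h : 0 < DG G) (hG : FinitelyPresentedGroup G) :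
    Large G := by
  obtain ⟨_, ⟨H, hH, rfl⟩, hpos⟩ := exists_lt_of_lt_csSup (by
    exact ⟨_, ⊤, by simp, rfl⟩) h
  refine Large.of_subgroup hH ?_
  have h0 : (0 : ℝ) < H.index := by positivity
  have h1 : 1 < deficiency H := by
    have := (div_pos_iff_of_pos_right h0).mp hpos
    linarith
  obtain ⟨a, b, hab⟩ := hG.finPres
  obtain ⟨n', -, R₀, φ₀, h2, h3, -⟩ := hab.subgroup H hH
  obtain ⟨_, ⟨n, R, φ, h4, h5, rfl⟩, hlt⟩ := exists_lt_of_lt_csSup (by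
    exact ⟨_, n', R₀, φ₀, h2, h3, rfl⟩) h1
  refine large_of_deficiency ⟨R, φ, h4, h5, le_rfl⟩ ?_
  have : (R.card + 1 : ℝ) < n := by linarith
  have : R.card + 1 < n := by exact_mod_cast this
  omega

/-! ### Conclusion -/

/-- `rdef(G) − 1 ≤ DG(G) ≤ DG_p(G) ≤ RG(G)`; in particular, if
`rdef(G) > 1` then `G` has positive rank gradient and is large. -/
theorem statement10 {G : Type*} [Group G] (hG : FinitelyPresentedGroup G)
    (p : ℕ) (hp : p.Prime) :
    rdef G - 1 ≤ DG G ∧ DG G ≤ DGp p G ∧ DGp p G ≤ RG G ∧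
    (1 < rdef G → 0 < RG G ∧ Large G) := by
  have h1 := rdef_le_DG hG
  have h2 := DG_le_DGp hp hG
  have h3 := DGp_le_RG hp hG
  exact ⟨h1, h2, h3, fun h => ⟨by linarith, large_of_DG (by linarith) hG⟩⟩

end ResDef
end

section
/- Let G be a group, H a finite index normal subgroup of G, K a normal subgroup of G, and g an element of H. If ν(g;G,K) is infinite, then ν(g;H,H∩K) is infinite. -/
/-!
Let `k` be the index of `H` in `G`. If `a ^ n = g ∈ H` and `d` is the order of `a H` in `G ⧸ H`, then
`d ≤ k` and `d ∣ n`, so `b = a ^ d` lies in `H` and is a root of `g` in `H` with exponent `n / d`.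
Passing from `a` to `b` divides the exponent by `d`, and the order modulo `K` by at most `d`. Hence
`ν(g; G, K) ≤ k * ν(g; H, H ∩ K)` (`nu_le_index_mul`), and the left side can be infinite only if
`ν(g; H, H ∩ K)` is.
-/


open scoped Classical ENNReal

namespace ResDef

variable {G : Type*} [Group G]

theorem orderInE_le (K : Subgroup G) (x : G) {j : ℕ} (hj : 0 < j) (hx : x ^ j ∈ K) :
    orderInE K x ≤ j := by
  have hmem : j ∈ {j : ℕ | 0 < j ∧ x ^ j ∈ K} := ⟨hj, hx⟩
  have hpos : 0 < orderIn K x := (Nat.sInf_mem ⟨j, hmem⟩).1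
  rw [orderInE, if_neg hpos.ne']
  exact_mod_cast Nat.sInf_le hmem

theorem pow_orderIn_mem (K : Subgroup G) (x : G) (h : orderIn K x ≠ 0) :
    x ^ orderIn K x ∈ K :=
  (Nat.sInf_mem (Nat.nonempty_of_pos_sInf (Nat.pos_of_ne_zero h))).2

/-- A root of `g ∈ H` in `G` has a power, with exponent `d` bounded by the index of `H`, that is a
root of `g` in `H`; here `d` is the order of `a H` in `G ⧸ H`. -/
theorem exists_root_in_subgroup (H : Subgroup G) (hHn : H.Normal) (hH : H.index ≠ 0)
    {g : G} (hg : g ∈ H) {a : G} {n : ℤ} (ha : a ^ n = g) :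
    ∃ (d : ℕ) (b : H) (m : ℤ), 0 < d ∧ d ≤ H.index ∧ (b : G) = a ^ d ∧ n = d * m ∧
      b ^ m = ⟨g, hg⟩ := by
  have hdvd : orderOf (a : G ⧸ H) ∣ H.index := orderOf_dvd_natCard _
  have hmem : a ^ orderOf (a : G ⧸ H) ∈ H := by
    rw [← QuotientGroup.eq_one_iff, QuotientGroup.mk_pow, pow_orderOf_eq_one]
  have hn : (orderOf (a : G ⧸ H) : ℤ) ∣ n := by
    rw [orderOf_dvd_iff_zpow_eq_one, ← QuotientGroup.mk_zpow, ha]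
    exact (QuotientGroup.eq_one_iff g).2 hg
  obtain ⟨m, hm⟩ := hn
  refine ⟨_, ⟨_, hmem⟩, m, Nat.pos_of_dvd_of_pos hdvd (Nat.pos_of_ne_zero hH),
    Nat.le_of_dvd (Nat.pos_of_ne_zero hH) hdvd, rfl, hm, ?_⟩
  apply Subtype.ext
  simp only [Subgroup.coe_zpow]
  rw [← ha, ← zpow_natCast, ← zpow_mul, ← hm]

theorem orderInE_le_mul (H K : Subgroup G) {a : G} {d : ℕ} (hd : 0 < d) {b : H}
    (hb : (b : G) = a ^ d) : orderInE K a ≤ d * orderInE (K.subgroupOf H) b := by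
  by_cases h : orderIn (K.subgroupOf H) b = 0
  · rw [orderInE.eq_1 (K.subgroupOf H), if_pos h, ENat.mul_top (by exact_mod_cast hd.ne')]
    exact le_top
  · rw [orderInE.eq_1 (K.subgroupOf H), if_neg h]
    have hmem := pow_orderIn_mem _ _ h
    rw [Subgroup.mem_subgroupOf, Subgroup.coe_pow, hb, ← pow_mul] at hmem
    exact_mod_cast orderInE_le K a (Nat.mul_pos hd (Nat.pos_of_ne_zero h)) hmem

theorem nu_le_index_mul (H : Subgroup G) (hHn : H.Normal) (hH : H.index ≠ 0) (K : Subgroup G)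
    {g : G} (hg : g ∈ H) :
    nu K g ≤ H.index * nu (K.subgroupOf H) (⟨g, hg⟩ : H) := by
  by_cases hK : g ∈ K
  · have hK' : (⟨g, hg⟩ : H) ∈ K.subgroupOf H := hK
    rw [nu, if_pos hK, nu, if_pos hK']
    apply sSup_le
    rintro _ ⟨a, ⟨n, ha⟩, rfl⟩
    obtain ⟨d, b, m, hd, hdk, hb, -, hbm⟩ := exists_root_in_subgroup H hHn hH hg ha
    exact (orderInE_le_mul H K hd hb).trans
      (mul_le_mul' (by exact_mod_cast hdk) (le_sSup ⟨b, ⟨m, hbm⟩, rfl⟩))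
  · have hK' : (⟨g, hg⟩ : H) ∉ K.subgroupOf H := hK
    rw [nu, if_neg hK, nu, if_neg hK']
    apply sSup_le
    rintro _ ⟨⟨a, n⟩, ⟨hn, ha⟩, rfl⟩
    obtain ⟨d, b, m, hd, hdk, hb, rfl, hbm⟩ := exists_root_in_subgroup H hHn hH hg ha
    have hm : m ≠ 0 := right_ne_zero_of_mul hn
    have habs : ((((d : ℤ) * m).natAbs : ℕ) : ℕ∞) = d * (m.natAbs : ℕ∞) := by
      rw [Int.natAbs_mul, Int.natAbs_natCast, Nat.cast_mul]
    exact habs.le.trans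
      (mul_le_mul' (by exact_mod_cast hdk) (le_sSup ⟨(b, m), ⟨hm, hbm⟩, rfl⟩))

/-- if `ν(g;G,K)` is infinite then `ν(g;H,H∩K)` is infinite. -/
theorem statement11 {G : Type*} [Group G] (H : Subgroup G) (hHn : H.Normal)
    (hH : H.index ≠ 0) (K : Subgroup G) (hKn : K.Normal) (g : G) (hg : g ∈ H)
    (hinf : nu K g = ⊤) :
    nu (K.subgroupOf H) (⟨g, hg⟩ : H) = ⊤ := by
  by_contra hne
  have hle := nu_le_index_mul H hHn hH K hg
  rw [hinf, top_le_iff] at hle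
  exact (WithTop.mul_ne_top (ENat.natCast_ne_top _) hne) hle

end ResDef
end

section
/- Let M and K be normal subgroups of a group G, where M is finitely generated as a normal subgroup of G. If H is a finite index normal subgroup of G which contains M, then relsize(M;H,K∩H) ≤ |G:H| · relsize(M;G,K). -/
/-!
Let `S` be a finite normal generating set of `M` in `G`, and let `s ∈ S`. If a power of `a` equals
`s` and `a` has order `d` modulo `H`, then `a` commutes with `s`, so up to `H`-conjugacy `s` has at
most `|G : H| / d` conjugates in `G`, represented by `t s t⁻¹` for `t` in a set of representatives
of the left cosets of `⟨aH⟩` in `G ⧸ H` (`exists_transversal`). These conjugates, taken over all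
`s ∈ S`, generate `M` as a normal subgroup of `H` (`normalClosure_conjugates`).

On the other hand `s ∈ H` forces `d` to divide the exponent `m` in `s = a ^ m`, so
`s = (a ^ d) ^ (m / d)` with `a ^ d ∈ H`. Hence passing from `G` to `H` divides `ν` by at most `d`
(`le_orderIn_mul_nu`). Choosing `a` to attain `ν(s; G, K)`, each of the `|G : H| / d` conjugates has
relative size at most `d · ν(s; G, K)⁻¹` in `H`, and the factors `d` cancel. If `ν(s; G, K)` is
infinite then so is `ν` of each conjugate in `H`, because `d ≤ |G : H|` is bounded.
-/


open scoped Classical ENNReal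

namespace ResDef

variable {G : Type*} [Group G]

theorem orderIn_eq_orderOf (K : Subgroup G) [K.Normal] (x : G) :
    orderIn K x = orderOf (x : G ⧸ K) := by
  have key : ∀ j : ℕ, x ^ j ∈ K ↔ (x : G ⧸ K) ^ j = 1 := fun j => by
    rw [← QuotientGroup.mk_pow, QuotientGroup.eq_one_iff]
  unfold orderIn
  rcases Nat.eq_zero_or_pos (orderOf (x : G ⧸ K)) with h0 | hpos
  · rw [h0, Nat.sInf_eq_zero]
    right
    rw [Set.eq_empty_iff_forall_notMem]
    rintro j ⟨hj, hxj⟩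
    exact orderOf_eq_zero_iff'.1 h0 j hj ((key j).1 hxj)
  · apply le_antisymm
    · exact Nat.sInf_le ⟨hpos, (key _).2 (pow_orderOf_eq_one _)⟩
    · refine le_csInf ⟨_, hpos, (key _).2 (pow_orderOf_eq_one _)⟩ ?_
      rintro j ⟨hj, hxj⟩
      exact orderOf_le_of_pow_eq_one hj ((key j).1 hxj)

theorem conj_mem_iff (K : Subgroup G) (hK : K.Normal) (t a : G) :
    t * a * t⁻¹ ∈ K ↔ a ∈ K := by
  rw [hK.mem_comm_iff, inv_mul_cancel_left]

theorem orderIn_conj (K : Subgroup G) (hK : K.Normal) (t a : G) :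
    orderIn K (t * a * t⁻¹) = orderIn K a := by
  simp only [orderIn, conj_pow, conj_mem_iff K hK]

/-- The set of values whose supremum is `ν(g; G, K)`, covering both cases `g ∈ K` and `g ∉ K`. -/
def nuSet (K : Subgroup G) (g : G) : Set ℕ∞ :=
  {v | ∃ (a : G) (m : ℤ), a ^ m = g ∧
    ((g ∈ K ∧ v = orderInE K a) ∨ (g ∉ K ∧ m ≠ 0 ∧ v = (m.natAbs : ℕ∞)))}

theorem nu_eq_sSup (K : Subgroup G) (g : G) : nu K g = sSup (nuSet K g) := by
  unfold nu nuSet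
  split_ifs with hg
  · congr 1
    ext v
    simp only [hg, Set.mem_image, Set.mem_ofPred_eq]
    constructor
    · rintro ⟨a, ⟨m, hm⟩, rfl⟩
      exact ⟨a, m, hm, by simp⟩
    · rintro ⟨a, m, hm, h⟩
      simp at h
      exact ⟨a, ⟨m, hm⟩, h.symm⟩
  · congr 1
    ext v
    simp only [hg, Set.mem_image, Set.mem_ofPred_eq]
    constructor
    · rintro ⟨⟨a, m⟩, ⟨hm, ha⟩, rfl⟩
      exact ⟨a, m, ha, by simpa using hm⟩
    · rintro ⟨a, m, hm, h⟩
      simp at h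
      exact ⟨(a, m), ⟨h.1, hm⟩, h.2.symm⟩

/-- The trivial expression `g = g ^ 1` contributes the value `1`. -/
theorem one_mem_nuSet (K : Subgroup G) (g : G) : (1 : ℕ∞) ∈ nuSet K g := by
  refine ⟨g, 1, zpow_one g, ?_⟩
  by_cases hg : g ∈ K
  · left
    refine ⟨hg, ?_⟩
    have h1 : orderIn K g = 1 := by
      unfold orderIn
      apply le_antisymm
      · exact Nat.sInf_le ⟨one_pos, by simpa using hg⟩
      · exact le_csInf ⟨1, one_pos, by simpa using hg⟩ fun j hj => hj.1
    simp [orderInE, h1]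
  · right
    simp [hg]

theorem one_le_nu (K : Subgroup G) (g : G) : 1 ≤ nu K g := by
  rw [nu_eq_sSup]
  exact le_sSup (one_mem_nuSet K g)

theorem orderIn_pos (H : Subgroup G) [H.Normal] (hH : H.index ≠ 0) (a : G) :
    0 < orderIn H a := by
  rw [orderIn_eq_orderOf]
  have : Finite (G ⧸ H) := Nat.finite_of_card_ne_zero hH
  exact orderOf_pos _

theorem orderIn_le_index (H : Subgroup G) [H.Normal] (hH : H.index ≠ 0) (a : G) :
    orderIn H a ≤ H.index := by
  rw [orderIn_eq_orderOf]
  have : Finite (G ⧸ H) := Nat.finite_of_card_ne_zero hH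
  exact Nat.le_of_dvd (Nat.pos_of_ne_zero hH) (orderOf_dvd_natCard _)

/-- Passing from `a` to `a ^ d ∈ H`, with `d` the order of `a` modulo `H`, shows that a value
counted by `ν(h; G, K)` exceeds `ν(h; H, K ∩ H)` by a factor of at most `d`. -/
theorem le_orderIn_mul_nu (K H : Subgroup G) [K.Normal] [H.Normal] (hH : H.index ≠ 0)
    (h : H) (a : G) (m : ℤ) (ham : a ^ m = h) (v : ℕ∞)
    (hv : ((h : G) ∈ K ∧ v = orderInE K a) ∨ ((h : G) ∉ K ∧ m ≠ 0 ∧ v = (m.natAbs : ℕ∞))) :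
    v ≤ (orderIn H a : ℕ∞) * nu (K.subgroupOf H) h := by
  obtain ⟨d, hd⟩ : ∃ d, d = orderIn H a := ⟨_, rfl⟩
  have hdpos : 0 < d := hd ▸ orderIn_pos H hH a
  have hd' : d = orderOf (a : G ⧸ H) := hd.trans (orderIn_eq_orderOf H a)
  rw [← hd]
  have hadH : a ^ d ∈ H := by
    rw [← QuotientGroup.eq_one_iff, QuotientGroup.mk_pow, hd', pow_orderOf_eq_one]
  obtain ⟨k, rfl⟩ : (d : ℤ) ∣ m := by
    rw [hd', orderOf_dvd_iff_zpow_eq_one, ← QuotientGroup.mk_zpow, QuotientGroup.eq_one_iff, ham]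
    exact h.2
  have hb : (⟨a ^ d, hadH⟩ : H) ^ k = h := by
    ext
    rw [← ham, zpow_mul]
    simp
  rcases hv with ⟨hhK, rfl⟩ | ⟨hhK, hm, rfl⟩
  · have hle : orderInE (K.subgroupOf H) ⟨a ^ d, hadH⟩ ≤ nu (K.subgroupOf H) h := by
      rw [nu_eq_sSup]
      exact le_sSup ⟨_, k, hb, Or.inl ⟨hhK, rfl⟩⟩
    refine le_trans ?_ (mul_le_mul_right hle _)
    have hord : orderIn (K.subgroupOf H) ⟨a ^ d, hadH⟩ = orderOf ((a : G ⧸ K) ^ d) := by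
      rw [← QuotientGroup.mk_pow, ← orderIn_eq_orderOf]
      simp [orderIn, Subgroup.mem_subgroupOf]
    unfold orderInE
    rw [hord, orderIn_eq_orderOf]
    by_cases h0 : orderOf ((a : G ⧸ K) ^ d) = 0
    · rw [if_pos h0, ENat.mul_top (by exact_mod_cast hdpos.ne')]
      exact le_top
    · have hdvd : orderOf (a : G ⧸ K) ∣ d * orderOf ((a : G ⧸ K) ^ d) := by
        rw [orderOf_dvd_iff_pow_eq_one, pow_mul, pow_orderOf_eq_one]
      have hpos : 0 < d * orderOf ((a : G ⧸ K) ^ d) := by positivity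
      rw [if_neg h0, if_neg (Nat.pos_of_dvd_of_pos hdvd hpos).ne']
      exact_mod_cast Nat.le_of_dvd hpos hdvd
  · have hle : (k.natAbs : ℕ∞) ≤ nu (K.subgroupOf H) h := by
      rw [nu_eq_sSup]
      exact le_sSup ⟨_, k, hb, Or.inr ⟨hhK, right_ne_zero_of_mul hm, rfl⟩⟩
    refine le_trans ?_ (mul_le_mul_right hle _)
    rw [Int.natAbs_mul]
    simp

theorem relsizeElem_nonneg (K : Subgroup G) (g : G) : 0 ≤ relsizeElem K g := by
  unfold relsizeElem
  positivity

theorem relsizeFinset_nonneg (K : Subgroup G) (S : Finset G) : 0 ≤ relsizeFinset K S :=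
  Finset.sum_nonneg fun _ _ => relsizeElem_nonneg _ _

/-- Some root `a` of `g` controls the relative sizes in `H` of all `G`-conjugates of `g`, up to
the order of `a` modulo `H`. -/
theorem exists_root_s13 (K H : Subgroup G) [hK : K.Normal] [hHn : H.Normal] (hH : H.index ≠ 0)
    (g : G) :
    ∃ (a : G) (m : ℤ), a ^ m = g ∧ ∀ (t : G) (h : H), (h : G) = t * g * t⁻¹ →
      relsizeElem (K.subgroupOf H) h ≤ (orderIn H a : ℝ) * relsizeElem K g := by
  have key : ∀ v ∈ nuSet K g, ∃ (a : G) (m : ℤ), a ^ m = g ∧ ∀ (t : G) (h : H),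
      (h : G) = t * g * t⁻¹ → v ≤ (orderIn H a : ℕ∞) * nu (K.subgroupOf H) h := by
    rintro v ⟨a, m, ham, hv⟩
    refine ⟨a, m, ham, fun t h hh => ?_⟩
    have hmem : (h : G) ∈ K ↔ g ∈ K := by
      rw [hh]
      exact conj_mem_iff K hK t g
    rw [← orderIn_conj H hHn t a]
    refine le_orderIn_mul_nu K H hH h (t * a * t⁻¹) m (by rw [conj_zpow, ham, hh]) v ?_
    rw [hmem]
    unfold orderInE at hv ⊢
    rwa [orderIn_conj K hK]
  by_cases htop : nu K g = ⊤
  · refine ⟨g, 1, zpow_one g, fun t h hh => ?_⟩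
    have hz : nu (K.subgroupOf H) h = ⊤ := by
      by_contra hne
      -- The orders modulo `H` are at most the index, so a finite `ν` in `H` bounds `ν` in `G`.
      have hle : nu K g ≤ (H.index : ℕ∞) * nu (K.subgroupOf H) h := by
        rw [nu_eq_sSup K g]
        refine sSup_le fun v hv => ?_
        obtain ⟨a, m, -, hall⟩ := key v hv
        refine (hall t h hh).trans (mul_le_mul_left ?_ _)
        exact_mod_cast orderIn_le_index H hH a
      rw [htop, top_le_iff] at hle
      exact WithTop.mul_ne_top (ENat.natCast_ne_top _) hne hle
    simp [relsizeElem, hz, htop]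
  · have hmem : nu K g ∈ nuSet K g := by
      rw [nu_eq_sSup] at htop ⊢
      have : Nonempty (nuSet K g) := ⟨1, one_mem_nuSet K g⟩
      exact ENat.sSup_mem_of_nonempty_of_lt_top (lt_top_iff_ne_top.2 htop)
    obtain ⟨a, m, ham, hall⟩ := key _ hmem
    refine ⟨a, m, ham, fun t h hh => ?_⟩
    by_cases hp : nu (K.subgroupOf H) h = ⊤
    · have := relsizeElem_nonneg K g
      have h0 : relsizeElem (K.subgroupOf H) h = 0 := by simp [relsizeElem, hp]
      rw [h0]
      positivity
    have hle := hall t h hh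
    have hN1 := one_le_nu K g
    have hp1 := one_le_nu (K.subgroupOf H) h
    unfold relsizeElem
    lift nu K g to ℕ using htop with N
    lift nu (K.subgroupOf H) h to ℕ using hp with p
    norm_cast at hle hN1 hp1
    simp only [ENat.toNat_natCast]
    have hN : (0 : ℝ) < N := by exact_mod_cast hN1
    have hp' : (0 : ℝ) < p := by exact_mod_cast hp1
    have hle' : (N : ℝ) ≤ orderIn H a * p := by exact_mod_cast hle
    rw [inv_eq_one_div, ← div_eq_mul_inv, div_le_div_iff₀ hp' hN]
    linarith

/-- Representatives of the left cosets in `G ⧸ H` of the cyclic subgroup generated by the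
image of `a`. -/
theorem exists_transversal_s13 (H : Subgroup G) [H.Normal] (hH : H.index ≠ 0) (a : G) :
    ∃ T : Finset G, T.card * orderIn H a ≤ H.index ∧
      ∀ x : G, ∃ h ∈ H, ∃ t ∈ T, ∃ k : ℤ, x = h * t * a ^ k := by
  have : Finite (G ⧸ H) := Nat.finite_of_card_ne_zero hH
  let C := Subgroup.zpowers (a : G ⧸ H)
  have : Fintype ((G ⧸ H) ⧸ C) := Fintype.ofFinite _
  refine ⟨Finset.univ.image fun q : (G ⧸ H) ⧸ C => q.out.out, ?_, fun x => ?_⟩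
  · rw [orderIn_eq_orderOf, ← Nat.card_zpowers]
    refine (Nat.mul_le_mul_right _ Finset.card_image_le).trans ?_
    rw [Finset.card_univ, ← Nat.card_eq_fintype_card]
    exact (Subgroup.card_eq_card_quotient_mul_card_subgroup C).ge
  · obtain ⟨q, hq⟩ : ∃ q : (G ⧸ H) ⧸ C, q = ((x : G ⧸ H) : (G ⧸ H) ⧸ C) := ⟨_, rfl⟩
    have h1 : (q.out : G ⧸ H)⁻¹ * (x : G ⧸ H) ∈ C := by
      rw [← QuotientGroup.eq, QuotientGroup.out_eq', hq]
    obtain ⟨k, hk⟩ := Subgroup.mem_zpowers_iff.1 h1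
    refine ⟨x * (a ^ k)⁻¹ * (q.out.out)⁻¹, ?_, q.out.out,
      Finset.mem_image_of_mem _ (Finset.mem_univ q), k, by group⟩
    rw [← QuotientGroup.eq_one_iff]
    simp only [QuotientGroup.mk_mul, QuotientGroup.mk_inv, QuotientGroup.mk_zpow,
      QuotientGroup.out_eq', hk]
    group

/-- If for each `s ∈ S` every element of `G` lies in `H t C(s)` for some `t ∈ T s`, then the
conjugates `t s t⁻¹` generate `M` as a normal subgroup of `H`. -/
theorem normalClosure_conjugates (M H : Subgroup G) (hMH : M ≤ H) (S : Set G)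
    (hS : Subgroup.normalClosure S = M) (T : G → Set G)
    (hT : ∀ s ∈ S, ∀ x : G, ∃ h ∈ H, ∃ t ∈ T s, ∃ c, Commute c s ∧ x = h * t * c) :
    Subgroup.normalClosure {y : H | ∃ s ∈ S, ∃ t ∈ T s, (y : G) = t * s * t⁻¹}
      = M.subgroupOf H := by
  have hM : M.Normal := hS ▸ Subgroup.normalClosure_normal
  have hSM : S ⊆ M := hS ▸ Subgroup.subset_normalClosure
  apply le_antisymm
  · apply Subgroup.normalClosure_le_normal
    rintro y ⟨s, hs, t, -, hy⟩
    change (y : G) ∈ M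
    rw [hy]
    exact hM.conj_mem s (hSM hs) t
  · set N := Subgroup.normalClosure {y : H | ∃ s ∈ S, ∃ t ∈ T s, (y : G) = t * s * t⁻¹}
      with hN
    have hle : M ≤ N.map H.subtype := by
      rw [← hS]
      unfold Subgroup.normalClosure
      rw [Subgroup.closure_le]
      intro y hy
      obtain ⟨s, hs, hsy⟩ := Group.mem_conjugatesOfSet_iff.1 hy
      obtain ⟨x, rfl⟩ := isConj_iff.1 hsy
      obtain ⟨h, hh, t, ht, c, hc, rfl⟩ := hT s hs x
      have hz : t * s * t⁻¹ ∈ H := hMH (hM.conj_mem s (hSM hs) t)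
      have hzN : (⟨t * s * t⁻¹, hz⟩ : H) ∈ N :=
        Subgroup.subset_normalClosure ⟨s, hs, t, ht, rfl⟩
      refine ⟨⟨h, hh⟩ * ⟨t * s * t⁻¹, hz⟩ * ⟨h, hh⟩⁻¹,
        Subgroup.normalClosure_normal.conj_mem _ hzN _, ?_⟩
      have hcs : c * s * c⁻¹ = s := by rw [hc.eq, mul_inv_cancel_right]
      calc h * (t * s * t⁻¹) * h⁻¹ = h * (t * (c * s * c⁻¹) * t⁻¹) * h⁻¹ := by rw [hcs]
        _ = h * t * c * s * (h * t * c)⁻¹ := by group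
    intro y hy
    obtain ⟨z, hz, hzy⟩ := hle (show (y : G) ∈ M from hy)
    rwa [← Subtype.ext (show (z : G) = y from hzy)]

/-- Every finite normal generating set `S` of `M` in `G` yields one in `H` of relative size at
most `|G : H|` times that of `S`. -/
theorem relsizeSubgroup_le (M K H : Subgroup G) [K.Normal] [H.Normal] (hH : H.index ≠ 0)
    (hMH : M ≤ H) (S : Finset G) (hS : Subgroup.normalClosure (S : Set G) = M) :
    relsizeSubgroup (K.subgroupOf H) (M.subgroupOf H) ≤ (H.index : ℝ) * relsizeFinset K S := by
  have hSM : (S : Set G) ⊆ M := hS ▸ Subgroup.subset_normalClosure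
  have hM : M.Normal := hS ▸ Subgroup.normalClosure_normal
  choose a m ham hrel using exists_root_s13 K H hH
  choose T hTcard hT using fun s => exists_transversal_s13 H hH (a s)
  -- The conjugates by the representatives, as elements of `H`.
  let F : G → G → H := fun s t => if hz : t * s * t⁻¹ ∈ H then ⟨t * s * t⁻¹, hz⟩ else 1
  have hF : ∀ s ∈ S, ∀ t, (F s t : G) = t * s * t⁻¹ := fun s hs t => by
    have hz : t * s * t⁻¹ ∈ H := hMH (hM.conj_mem s (hSM hs) t)
    simp [F, hz]
  let S' : Finset H := (S.sigma T).image fun p => F p.1 p.2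
  have hS' : Subgroup.normalClosure (S' : Set H) = M.subgroupOf H := by
    rw [← normalClosure_conjugates M H hMH S hS (fun s => (T s : Set G))]
    · congr 1
      ext y
      simp only [S', Finset.coe_image, Set.mem_image, Set.mem_ofPred_eq, Finset.mem_coe,
        Finset.mem_sigma]
      constructor
      · rintro ⟨⟨s, t⟩, ⟨hs, ht⟩, rfl⟩
        exact ⟨s, hs, t, ht, hF s hs t⟩
      · rintro ⟨s, hs, t, ht, hy⟩
        exact ⟨⟨s, t⟩, ⟨hs, ht⟩, Subtype.ext ((hF s hs t).trans hy.symm)⟩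
    · intro s _ x
      obtain ⟨h, hh, t, ht, k, hx⟩ := hT s x
      refine ⟨h, hh, t, ht, a s ^ k, ?_, hx⟩
      have := (Commute.refl (a s)).zpow_zpow k (m s)
      rwa [ham] at this
  have hbdd : BddBelow {x : ℝ | ∃ S : Finset H,
      Subgroup.normalClosure (S : Set H) = M.subgroupOf H ∧
      x = relsizeFinset (K.subgroupOf H) S} := by
    refine ⟨0, ?_⟩
    rintro x ⟨S, -, rfl⟩
    exact relsizeFinset_nonneg _ _
  refine (csInf_le hbdd ⟨S', hS', rfl⟩).trans ?_
  unfold relsizeFinset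
  have hnn := relsizeElem_nonneg (K.subgroupOf H)
  calc ∑ y ∈ S', relsizeElem (K.subgroupOf H) y
      ≤ ∑ p ∈ S.sigma T, relsizeElem (K.subgroupOf H) (F p.1 p.2) :=
        Finset.sum_image_le_of_nonneg fun y _ => hnn y
    _ = ∑ s ∈ S, ∑ t ∈ T s, relsizeElem (K.subgroupOf H) (F s t) := Finset.sum_sigma ..
    _ ≤ ∑ s ∈ S, (H.index : ℝ) * relsizeElem K s := by
        refine Finset.sum_le_sum fun s hs => ?_
        calc ∑ t ∈ T s, relsizeElem (K.subgroupOf H) (F s t)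
            ≤ ∑ t ∈ T s, (orderIn H (a s) : ℝ) * relsizeElem K s :=
              Finset.sum_le_sum fun t _ => hrel s t _ (hF s hs t)
          _ = (((T s).card * orderIn H (a s) : ℕ) : ℝ) * relsizeElem K s := by
              rw [Finset.sum_const, nsmul_eq_mul]
              push_cast
              ring
          _ ≤ (H.index : ℝ) * relsizeElem K s :=
              mul_le_mul_of_nonneg_right (by exact_mod_cast hTcard s) (relsizeElem_nonneg K s)
    _ = (H.index : ℝ) * ∑ s ∈ S, relsizeElem K s := (Finset.mul_sum ..).symm

/-- if `M ≤ H` are normal subgroups of `G` with `M` finitely generated as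
a normal subgroup and `H` of finite index, and `K` is normal in `G`, then
`relsize(M;H,K∩H) ≤ |G:H| · relsize(M;G,K)`. -/
theorem statement13 {G : Type*} [Group G] (M K H : Subgroup G)
    (hM : M.Normal) (hK : K.Normal) (hHn : H.Normal) (hH : H.index ≠ 0)
    (hMfg : ∃ S : Finset G, Subgroup.normalClosure (S : Set G) = M)
    (hMH : M ≤ H) :
    relsizeSubgroup (K.subgroupOf H) (M.subgroupOf H)
      ≤ (H.index : ℝ) * relsizeSubgroup K M := by
  have hpos : (0 : ℝ) < H.index := by exact_mod_cast Nat.pos_of_ne_zero hH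
  rw [← div_le_iff₀' hpos]
  obtain ⟨S₀, hS₀⟩ := hMfg
  refine le_csInf ⟨_, S₀, hS₀, rfl⟩ ?_
  rintro x ⟨S, hS, rfl⟩
  rw [div_le_iff₀' hpos]
  exact relsizeSubgroup_le M K H hH hMH S hS

end ResDef
end
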